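/- arXiv:1207.1232 — 2 statements merged into one kernel-verified Lean document; each statement's English description precedes it below -/
import Mathlib

section
/- Let 𝔤 : (0,∞) → (0,∞) be continuous and non-increasing with lim_{t→0⁺} 𝔤(t) = +∞ and lim_{t→+∞} 𝔤(t) = 0, and let 𝔥 : (0,∞) → (0,∞] be lower semicontinuous with M := sup{𝔥(t) : t ≥ π} < ∞. Assume Ω = {x + iy : x ∈ (0,∞) and 𝔤(x) < y < 𝔤(x) + 𝔥(x)} is a simply connected domain, and let 𝔣 : D → Ω be a conformal bijection with 𝔣(0) = π + i(𝔤(π) + 𝔥(π)/2). Define the Schur function φ(z) = exp(−𝔣(z)), z ∈ D. Suppose that for some r ∈ (0,∞] and integers 0 ≤ n < N ≤ ∞ one has {𝔥(t) : t ≤ r} ⊆ (2nπ, 2Nπ]. Then for every z ∈ D with |z| > e^{−r}, one has n ≤ n_φ(z) ≤ N; in particular, when n ≥ 1, {z ∈ D : |z| > e^{−r}} ⊆ φ(D) ⊆ D \ {0}. -/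
/-! The map `u ↦ exp (-u)` on `Ω` has as its fibre over `z` (with `t = log |z|⁻¹`) the points
`-log z + 2πik`, `k ∈ ℤ`, of `Ω`; since `𝔣` is a bijection onto `Ω`, the counting function of `φ` at
`z` is the number of `k` for which `-arg z + 2πk` lies in the open interval from `g t` to
`g t + h t`. An open interval of length in `(2nπ, 2Nπ]` contains at least `n` and at most `N` points
of a progression of step `2π`: this is `le_encard_progression` and `encard_progression_le`, and
`encard_fibre` is the translation of the fibre into such a progression. -/

open Complex MeasureTheory Metric Set Filter Topology
open scoped ENNReal NNReal

noncomputable section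

/-- Normalized area measure `dA = dx dy / π` on `ℂ`. -/
def nA : Measure ℂ := (ENNReal.ofReal Real.pi)⁻¹ • volume

/-- The open unit disk `D ⊆ ℂ`. -/
def uD : Set ℂ := Metric.ball (0 : ℂ) 1

/-- A Schur function: an analytic self-map of the open unit disk. -/
def IsSchur (φ : ℂ → ℂ) : Prop :=
  DifferentiableOn ℂ φ uD ∧ Set.MapsTo φ uD uD

/-- Squared norm of `f` in the weighted Dirichlet space `𝒟_α`, with value in `[0,∞]`:
`‖f‖_α² = |f(0)|² + (α+1) ∫_D |f′(z)|² (1−|z|²)^α dA(z)`. -/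
def eDNormSqW (α : ℝ) (f : ℂ → ℂ) : ℝ≥0∞ :=
  ENNReal.ofReal (‖f 0‖ ^ 2) +
    ∫⁻ z in uD, ENNReal.ofReal ((α + 1) * ‖deriv f z‖ ^ 2 * (1 - ‖z‖ ^ 2) ^ α) ∂nA

/-- Squared Dirichlet norm: `‖f‖² = |f(0)|² + ∫_D |f′(z)|² dA(z)`. -/
def eDNormSq (f : ℂ → ℂ) : ℝ≥0∞ := eDNormSqW 0 f

/-- Membership in the weighted Dirichlet space `𝒟_α`. -/
def MemDW (α : ℝ) (f : ℂ → ℂ) : Prop :=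
  DifferentiableOn ℂ f uD ∧ eDNormSqW α f < ⊤

/-- Membership in `𝒟_{α,*}`. -/
def MemDWStar (α : ℝ) (f : ℂ → ℂ) : Prop := MemDW α f ∧ f 0 = 0

/-- Membership in the Dirichlet space `𝒟`. -/
def MemD (f : ℂ → ℂ) : Prop := MemDW 0 f

/-- Membership in `𝒟_*`. -/
def MemDStar (f : ℂ → ℂ) : Prop := MemDWStar 0 f

/-- The composition operator `C_φ f = f ∘ φ`. -/
def compOp (φ : ℂ → ℂ) : (ℂ → ℂ) → ℂ → ℂ := fun f z => f (φ z)

/-- Operator norm of `T` with respect to the space `{f | Mem f}` with squared norm `NSq`: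
the least `C` such that `‖T f‖² ≤ C² ‖f‖²` for all `f` in the space (`⊤` if none). -/
def eOpNorm (Mem : (ℂ → ℂ) → Prop) (NSq : (ℂ → ℂ) → ℝ≥0∞)
    (T : (ℂ → ℂ) → ℂ → ℂ) : ℝ≥0∞ :=
  sInf {C : ℝ≥0∞ | ∀ f, Mem f → NSq (T f) ≤ C ^ 2 * NSq f}

/-- The `n`-th approximation number `a_n(T) = inf {‖T − R‖ : rank R < n}`. -/
def eApproxNum (Mem : (ℂ → ℂ) → Prop) (NSq : (ℂ → ℂ) → ℝ≥0∞)
    (T : (ℂ → ℂ) → ℂ → ℂ) (n : ℕ) : ℝ≥0∞ :=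
  sInf {c : ℝ≥0∞ | ∃ R : (ℂ → ℂ) →ₗ[ℂ] (ℂ → ℂ),
    Module.rank ℂ (LinearMap.range R) < (n : Cardinal) ∧
    c = eOpNorm Mem NSq (fun f z => T f z - R f z)}

/-- `T` is a bounded operator on the space `{f | Mem f}` with squared norm `NSq`. -/
def IsBoundedOpOn (Mem : (ℂ → ℂ) → Prop) (NSq : (ℂ → ℂ) → ℝ≥0∞)
    (T : (ℂ → ℂ) → ℂ → ℂ) : Prop :=
  (∀ f, Mem f → Mem (T f)) ∧ eOpNorm Mem NSq T ≠ ⊤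

/-- `T` is a compact operator on the space `{f | Mem f}`: it is bounded and its
approximation numbers tend to `0` (the standard characterization of compactness
for operators on a Hilbert space). -/
def IsCompactOpOn (Mem : (ℂ → ℂ) → Prop) (NSq : (ℂ → ℂ) → ℝ≥0∞)
    (T : (ℂ → ℂ) → ℂ → ℂ) : Prop :=
  IsBoundedOpOn Mem NSq T ∧
    Filter.Tendsto (fun n => eApproxNum Mem NSq T n) Filter.atTop (𝓝 0)

/-- `T` belongs to the Schatten class `S_p` of the space `{f | Mem f}`:
`Σ_{n≥1} a_n(T)^p < ∞`. -/
def MemSchattenOn (Mem : (ℂ → ℂ) → Prop) (NSq : (ℂ → ℂ) → ℝ≥0∞)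
    (T : (ℂ → ℂ) → ℂ → ℂ) (p : ℝ) : Prop :=
  IsBoundedOpOn Mem NSq T ∧
    ∑' n : ℕ, (eApproxNum Mem NSq T (n + 1)) ^ p ≠ ⊤

/-- `C_φ` belongs to the Schatten class `S_p(𝒟_*)`. -/
def MemSchattenD (p : ℝ) (φ : ℂ → ℂ) : Prop :=
  MemSchattenOn MemDStar eDNormSq (compOp φ) p

/-- `C_φ` is a Hilbert–Schmidt operator on `𝒟_*`: it is bounded and
`Σ_n ‖C_φ e_n‖² < ∞` for the orthonormal basis `e_n(z) = zⁿ/√n`, `n ≥ 1`, of `𝒟_*`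
(equivalently, for every orthonormal basis). -/
def HilbertSchmidtOnDStar (φ : ℂ → ℂ) : Prop :=
  IsBoundedOpOn MemDStar eDNormSq (compOp φ) ∧
    ∑' n : ℕ, eDNormSq (fun z => φ z ^ (n + 1) / (Real.sqrt (n + 1) : ℂ)) ≠ ⊤

/-- Squared Hardy norm `‖f‖² = sup_{0≤r<1} (1/2π) ∫_0^{2π} |f(r e^{it})|² dt`. -/
def eHardyNormSq (f : ℂ → ℂ) : ℝ≥0∞ :=
  ⨆ r : Set.Ico (0 : ℝ) 1,
    (∫⁻ t in Set.Ioc 0 (2 * Real.pi),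
      ENNReal.ofReal (‖f ((r : ℝ) * Complex.exp (t * Complex.I))‖ ^ 2)) /
        ENNReal.ofReal (2 * Real.pi)

/-- Membership in the Hardy space `H²`. -/
def MemHardy (f : ℂ → ℂ) : Prop := DifferentiableOn ℂ f uD ∧ eHardyNormSq f < ⊤

/-- Squared Bergman norm `‖f‖² = ∫_D |f|² dA`. -/
def eBergNormSq (f : ℂ → ℂ) : ℝ≥0∞ := ∫⁻ z in uD, ENNReal.ofReal (‖f z‖ ^ 2) ∂nA

/-- Membership in the Bergman space `𝔅²`. -/
def MemBerg (f : ℂ → ℂ) : Prop := DifferentiableOn ℂ f uD ∧ eBergNormSq f < ⊤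

/-- The logarithmic energy `I_μ = ∬ log(e/|z−w|) dμ(z) dμ(w)` of a measure on the circle. -/
def eEnergy (μ : Measure ℂ) : ℝ≥0∞ :=
  ∫⁻ z, ∫⁻ w, ENNReal.ofReal (Real.log (Real.exp 1 / dist z w)) ∂μ ∂μ

/-- A Borel set `E` (contained in the unit circle) has logarithmic capacity zero iff
`I_μ = ∞` for every Borel probability measure `μ` with compact support contained in `E`. -/
def HasLogCapacityZero (E : Set ℂ) : Prop :=
  ∀ μ : Measure ℂ, IsProbabilityMeasure μ →
    (∃ K, IsCompact K ∧ K ⊆ E ∧ μ Kᶜ = 0) → eEnergy μ = ⊤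

/-- The weighted Nevanlinna counting function `N_{φ,α}(w) = Σ_{z∈D, φ(z)=w} (1−|z|²)^α`. -/
def nevanlinnaE (φ : ℂ → ℂ) (α : ℝ) (w : ℂ) : ℝ≥0∞ :=
  ∑' z : {z : ℂ // z ∈ uD ∧ φ z = w}, ENNReal.ofReal ((1 - ‖(z : ℂ)‖ ^ 2) ^ α)

/-- The Carleson window `W(ξ,h)`. -/
def carlesonW (ξ : ℂ) (h : ℝ) : Set ℂ :=
  {w ∈ uD | 1 - ‖w‖ ≤ h ∧ |Complex.arg (w * (starRingEnd ℂ) ξ)| ≤ Real.pi * h}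

/-- Argument normalized to lie in `[0, 2π)`. -/
def argNN (z : ℂ) : ℝ :=
  if 0 ≤ Complex.arg z then Complex.arg z else Complex.arg z + 2 * Real.pi

/-- The Hastings–Luecking window `R_{n,j}`. -/
def HLwindow (n j : ℕ) : Set ℂ :=
  {z ∈ uD | 1 - ((2 : ℝ) ^ n)⁻¹ ≤ ‖z‖ ∧ ‖z‖ < 1 - ((2 : ℝ) ^ (n + 1))⁻¹ ∧
    2 * j * Real.pi / 2 ^ n ≤ argNN z ∧ argNN z < 2 * (j + 1) * Real.pi / 2 ^ n}

/-- `g` is an a.e. radial limit function of `φ`: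
for a.e. `t`, `φ(r e^{it}) → g(t)` as `r → 1⁻`. -/
def IsRadialLimit (φ : ℂ → ℂ) (g : ℝ → ℂ) : Prop :=
  ∀ᵐ t : ℝ, Filter.Tendsto (fun r : ℝ => φ ((r : ℂ) * Complex.exp (t * Complex.I)))
    (𝓝[<] (1 : ℝ)) (𝓝 (g t))

/-- The indices `k` for which `θ + 2πk` lies in the open interval from `a` to `a + L`, `L ≤ ∞`. -/
def progIdx (θ a : ℝ) (L : ℝ≥0∞) : Set ℤ :=
  {k | a < θ + 2 * Real.pi * k ∧ ENNReal.ofReal (θ + 2 * Real.pi * k - a) < L}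

lemma progIdx_floor_bounds (θ a : ℝ) :
    θ + 2 * Real.pi * ⌊(a - θ) / (2 * Real.pi)⌋ ≤ a ∧
      a < θ + 2 * Real.pi * (⌊(a - θ) / (2 * Real.pi)⌋ + 1) := by
  have hp := Real.two_pi_pos
  have h1 := Int.floor_le ((a - θ) / (2 * Real.pi))
  have h2 := Int.lt_floor_add_one ((a - θ) / (2 * Real.pi))
  rw [le_div_iff₀ hp] at h1
  rw [div_lt_iff₀ hp] at h2
  constructor <;> linarith

lemma le_encard_progression (θ a : ℝ) (L : ℝ≥0∞) (n : ℕ)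
    (hL : ENNReal.ofReal (2 * n * Real.pi) < L) : (n : ℕ∞) ≤ (progIdx θ a L).encard := by
  obtain ⟨h1, h2⟩ := progIdx_floor_bounds θ a
  set m := ⌊(a - θ) / (2 * Real.pi)⌋
  have hp := Real.two_pi_pos
  have hsub : ((Finset.Ioc m (m + n) : Finset ℤ) : Set ℤ) ⊆ progIdx θ a L := by
    intro k hk
    simp only [Finset.coe_Ioc, Set.mem_Ioc] at hk
    have hk1 : (m : ℝ) + 1 ≤ k := by exact_mod_cast hk.1
    have hk2 : (k : ℝ) ≤ m + n := by exact_mod_cast hk.2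
    refine ⟨by nlinarith, lt_of_le_of_lt (ENNReal.ofReal_le_ofReal ?_) hL⟩
    nlinarith
  calc (n : ℕ∞) = ((Finset.Ioc m (m + n) : Finset ℤ) : Set ℤ).encard := by
        rw [Set.encard_coe_eq_coe_finsetCard]; simp
    _ ≤ _ := Set.encard_le_encard hsub

lemma encard_progression_le (θ a : ℝ) (L : ℝ≥0∞) (N : ℕ∞)
    (hL : L ≤ N.toENNReal * ENNReal.ofReal (2 * Real.pi)) : (progIdx θ a L).encard ≤ N := by
  induction N using ENat.recTopCoe with
  | top => exact le_top
  | coe n =>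
    obtain ⟨h1, h2⟩ := progIdx_floor_bounds θ a
    set m := ⌊(a - θ) / (2 * Real.pi)⌋
    have hp := Real.two_pi_pos
    have hsub : progIdx θ a L ⊆ ((Finset.Ioc m (m + n) : Finset ℤ) : Set ℤ) := by
      rintro k ⟨hk1, hk2⟩
      have hk3 := lt_of_lt_of_le hk2 hL
      rw [ENat.toENNReal_coe, ← ENNReal.ofReal_natCast, ← ENNReal.ofReal_mul (by positivity),
        ENNReal.ofReal_lt_ofReal_iff_of_nonneg (by linarith)] at hk3
      have hk4 : (m : ℝ) < k := by
        refine lt_of_mul_lt_mul_left ?_ hp.le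
        linarith
      have hk5 : (k : ℝ) < m + 1 + n := by
        refine lt_of_mul_lt_mul_left ?_ hp.le
        nlinarith
      have hk6 : m < k := by exact_mod_cast hk4
      have hk7 : k < m + 1 + n := by exact_mod_cast hk5
      simp only [Finset.coe_Ioc, Set.mem_Ioc]
      omega
    calc _ ≤ ((Finset.Ioc m (m + n) : Finset ℤ) : Set ℤ).encard := Set.encard_le_encard hsub
      _ = n := by rw [Set.encard_coe_eq_coe_finsetCard]; simp

/-- Both sides count the points of `Ω` on which `u ↦ exp (-u)` takes the value `z`. -/
lemma encard_fibre (g : ℝ → ℝ) (h : ℝ → ℝ≥0∞) (𝔣 : ℂ → ℂ)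
    (hbij : Set.BijOn 𝔣 uD {z : ℂ | 0 < z.re ∧ g z.re < z.im ∧
      ENNReal.ofReal (z.im - g z.re) < h z.re})
    (z : ℂ) (hz : z ≠ 0) (ht : 0 < Real.log ‖z‖⁻¹) :
    {w ∈ uD | Complex.exp (-𝔣 w) = z}.encard =
      (progIdx (-z.arg) (g (Real.log ‖z‖⁻¹)) (h (Real.log ‖z‖⁻¹))).encard := by
  let P : ℤ → ℂ := fun k => -Complex.log z + k * (2 * Real.pi * Complex.I)
  have hre (k : ℤ) : (P k).re = Real.log ‖z‖⁻¹ := by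
    simp [P, Complex.log_re, Real.log_inv]
  have him (k : ℤ) : (P k).im = -z.arg + 2 * Real.pi * k := by
    simp [P, Complex.log_im]; ring
  have hP : Function.Injective P := by
    intro j k hjk
    have h1 := congrArg Complex.im hjk
    rw [him, him] at h1
    have h2 : (j : ℝ) = k := mul_left_cancel₀ Real.two_pi_pos.ne' (by linarith)
    exact_mod_cast h2
  have hexp (u : ℂ) : Complex.exp (-u) = z ↔ ∃ k : ℤ, P k = u := by
    conv_lhs => rw [← Complex.exp_log hz, Complex.exp_eq_exp_iff_exists_int]
    constructor
    · rintro ⟨k, hk⟩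
      exact ⟨-k, by simp only [P]; push_cast; linear_combination hk⟩
    · rintro ⟨k, rfl⟩
      exact ⟨-k, by simp only [P]; push_cast; ring⟩
  have himg : 𝔣 '' {w ∈ uD | Complex.exp (-𝔣 w) = z} =
      P '' progIdx (-z.arg) (g (Real.log ‖z‖⁻¹)) (h (Real.log ‖z‖⁻¹)) := by
    ext u
    constructor
    · rintro ⟨w, ⟨hw, hwz⟩, rfl⟩
      obtain ⟨k, hk⟩ := (hexp _).1 hwz
      have hΩ := hbij.mapsTo hw
      rw [← hk] at hΩ
      simp only [Set.mem_ofPred_eq, hre, him] at hΩ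
      exact ⟨k, hΩ.2, hk⟩
    · rintro ⟨k, hk, rfl⟩
      obtain ⟨w, hw, hwk⟩ := hbij.surjOn (show P k ∈ _ by
        simp only [Set.mem_ofPred_eq, hre, him]; exact ⟨ht, hk⟩)
      exact ⟨w, ⟨hw, (hexp _).2 ⟨k, hwk.symm⟩⟩, hwk⟩
  rw [← (hbij.injOn.mono (Set.sep_subset _ _)).encard_image, himg, hP.encard_image]

/- STATEMENT 11 -/
theorem stmt11 (g : ℝ → ℝ) (h : ℝ → ℝ≥0∞)
    (hgpos : ∀ t : ℝ, 0 < t → 0 < g t)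
    (hgc : ContinuousOn g (Set.Ioi 0)) (hgm : AntitoneOn g (Set.Ioi 0))
    (hg0 : Filter.Tendsto g (𝓝[>] (0 : ℝ)) Filter.atTop)
    (hginf : Filter.Tendsto g Filter.atTop (𝓝 0))
    (hhpos : ∀ t : ℝ, 0 < t → 0 < h t)
    (hhlsc : LowerSemicontinuousOn h (Set.Ioi 0))
    (hM : (⨆ t ∈ Set.Ici Real.pi, h t) < ⊤)
    (Ω : Set ℂ)
    (hΩ : Ω = {z : ℂ | 0 < z.re ∧ g z.re < z.im ∧
      ENNReal.ofReal (z.im - g z.re) < h z.re})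
    (𝔣 : ℂ → ℂ) (h𝔣 : DifferentiableOn ℂ 𝔣 uD) (hbij : Set.BijOn 𝔣 uD Ω)
    (h𝔣0 : 𝔣 0 = (Real.pi : ℂ) +
      ((g Real.pi + (h Real.pi).toReal / 2 : ℝ) : ℂ) * Complex.I)
    (φ : ℂ → ℂ) (hφ : φ = fun z => Complex.exp (-𝔣 z))
    (r : ℝ≥0∞) (hr : 0 < r) (n : ℕ) (N : ℕ∞) (hnN : (n : ℕ∞) < N)
    (hrange : ∀ t : ℝ, 0 < t → ENNReal.ofReal t ≤ r →
      ENNReal.ofReal (2 * n * Real.pi) < h t ∧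
        h t ≤ N.toENNReal * ENNReal.ofReal (2 * Real.pi)) :
    (∀ z : ℂ, z ∈ uD → z ≠ 0 → ENNReal.ofReal (Real.log ‖z‖⁻¹) < r →
      (n : ℕ∞) ≤ {w ∈ uD | φ w = z}.encard ∧ {w ∈ uD | φ w = z}.encard ≤ N) ∧
    (1 ≤ n →
      ({z ∈ uD | z ≠ 0 ∧ ENNReal.ofReal (Real.log ‖z‖⁻¹) < r} ⊆ φ '' uD ∧
        φ '' uD ⊆ uD \ {0})) := by
  subst hΩ hφ
  have key : ∀ z : ℂ, z ∈ uD → z ≠ 0 → ENNReal.ofReal (Real.log ‖z‖⁻¹) < r →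
      (n : ℕ∞) ≤ {w ∈ uD | Complex.exp (-𝔣 w) = z}.encard ∧
        {w ∈ uD | Complex.exp (-𝔣 w) = z}.encard ≤ N := by
    intro z hzD hz hzr
    have hz1 : ‖z‖ < 1 := by simpa [uD] using hzD
    have ht : 0 < Real.log ‖z‖⁻¹ :=
      Real.log_pos ((one_lt_inv₀ (norm_pos_iff.2 hz)).2 hz1)
    obtain ⟨hlo, hhi⟩ := hrange _ ht hzr.le
    rw [encard_fibre g h 𝔣 hbij z hz ht]
    exact ⟨le_encard_progression _ _ _ _ hlo, encard_progression_le _ _ _ _ hhi⟩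
  refine ⟨key, fun hn => ⟨?_, ?_⟩⟩
  · rintro z ⟨hzD, hz, hzr⟩
    have h1 : (1 : ℕ∞) ≤ {w ∈ uD | Complex.exp (-𝔣 w) = z}.encard :=
      le_trans (by exact_mod_cast hn) (key z hzD hz hzr).1
    obtain ⟨w, hw, hwz⟩ := Set.one_le_encard_iff_nonempty.1 h1
    exact ⟨w, hw, hwz⟩
  · rintro _ ⟨w, hw, rfl⟩
    have hre := (hbij.mapsTo hw).1
    refine ⟨?_, Complex.exp_ne_zero _⟩
    simpa [uD, Complex.norm_exp] using hre

end
end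

section
/- Let −1 < α ≤ β, p > 0, and let φ be a Schur function with φ(0) = 0. If C_φ belongs to the Schatten class S_p(𝒟_{α,*}), then C_φ belongs to the Schatten class S_p(𝒟_{β,*}). -/
/-!
Both memberships are compared with one condition on `φ`. Cut the disk into Whitney cells, cell `i`
having scale `h_i`; let `m_i` be the measure of the preimage of cell `i` under `φ` for
`|φ'|² dν_α`, where `dν_α = (α+1)(1-|z|²)^α dA`, and let `d_i = m_i / h_i^{2+α}` (`dens`). The
pivot is the convergence of `∑ d_i^{p/2}`. Since `φ(0) = 0`, every norm is an integral
`‖f ∘ φ‖² = ∫ |f' ∘ φ|² |φ'|² dν`.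

*Sufficiency for `β`* (`schatten_of_sum`). By the Schwarz lemma `1-|z|² ≤ 2(1-|φ(z)|)`, so passing
from `α` to `β` multiplies the mass of cell `i` by at most a constant times `h_i^{β-α}`
(`mass_le`), and the densities for `β` are dominated by those for `α`. Given a level `t`, let `f`
range over the functions such that the `m`-th Taylor coefficient of `f'` at the centre of cell `i`
vanishes whenever `d_i 4⁻ᵐ > t`. On such functions `‖f ∘ φ‖² ≤ C t ‖f‖²` (`upper_est`), and the
orthogonal projection onto them has corank at most the number of these pairs `(i, m)`. So, up to a
constant, the squares of the approximation numbers lie below the decreasing rearrangement of the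
family `d_i 4⁻ᵐ`, whose `p/2`-th powers have sum comparable to `∑ d_i^{p/2}`. Using all the Taylor
coefficients makes the argument work for every `p > 0`.

*Necessity for `α`* (`count_cells`, `sum_of_count`). Let `R` have rank at most `n` and
`‖C_φ - R‖ ≤ t`, and let `S` be a finite set of cells with `d_i ≥ T = B t²`. Each cell has a
normalized test function `f_i` with `|f_i'|² ≥ c h_i^{-(2+α)}` on the cell. In the span of the
`f_i`, `i ∈ S`, choose an orthonormal basis consisting of at most `|S|` vectors of `ker R` and at
most `n` others (`split_frame`), so that `|f_i'|²` is pointwise at most `‖f_i‖²` times the sum of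
the squares of the derivatives of the basis. Integrate this over the preimage of cell `i` with the
weight `T / d_i ≤ 1` and sum over `i ∈ S`. The left side is at least `c T |S|`; a vector of `ker R`
contributes at most `‖C_φ k‖² ≤ t²`, and any other vector at most a constant times `T`, by
subharmonicity and the bounded overlap of the Whitney disks. For `B` large the first contribution is
absorbed, and `|S| ≤ C n`. Comparing counting functions gives `∑ d_i^{p/2} ≤ C ∑ a_n(C_φ)^p`.
-/

open Complex MeasureTheory Metric Set Filter Topology
open scoped ENNReal NNReal

noncomputable section

/-! ### Mean values and Taylor coefficients -/

lemma isOpen_uD : IsOpen uD := Metric.isOpen_ball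

lemma mem_uD {z : ℂ} : z ∈ uD ↔ ‖z‖ < 1 := by simp [uD]

/-- Sub-mean value inequality for `|g|²` over a disk. -/
lemma mean_value_sq {g : ℂ → ℂ} {z : ℂ} {r : ℝ} (hg : DifferentiableOn ℂ g (ball z r)) :
    ‖g z‖ₑ ^ 2 * volume (ball z r) ≤ ∫⁻ u in ball z r, ‖g u‖ₑ ^ 2 := by
  -- Average over all rotations about `z`; on each circle apply the mean value property to `g²`.
  set F : ℂ → ℝ≥0∞ := (ball (0 : ℂ) r).indicator (fun u => ‖g (z + u)‖ₑ ^ 2) with hF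
  have hshift : ContinuousOn (fun u => g (z + u)) (ball (0 : ℂ) r) := by
    refine hg.continuousOn.comp (by fun_prop) ?_
    intro u hu
    simpa using hu
  have hFm : Measurable F := by
    have h1 : ContinuousOn (fun u => ‖g (z + u)‖ₑ ^ 2) (ball (0 : ℂ) r) := by
      have := hshift.enorm
      exact (ENNReal.continuous_pow 2).comp_continuousOn this
    classical
    have := h1.measurable_piecewise (g := (0 : ℂ → ℝ≥0∞)) continuousOn_const
      measurableSet_ball
    rw [hF]
    rwa [Set.piecewise_eq_indicator] at this
  have hRHS : ∫⁻ u in ball z r, ‖g u‖ₑ ^ 2 = ∫⁻ u, F u := by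
    rw [hF, lintegral_indicator measurableSet_ball, ← lintegral_indicator measurableSet_ball,
      ← lintegral_indicator measurableSet_ball, ← lintegral_add_left_eq_self _ z]
    congr 1
    ext u
    simp [Set.indicator]
  have hrot : ∀ θ : ℝ, ∫⁻ u, F (circleMap 0 1 θ * u) = ∫⁻ u, F u := by
    intro θ
    let c : Circle := Circle.exp θ
    have hmp := (rotation c).measurePreserving
    have := hmp.lintegral_comp hFm
    rw [← this]
    simp [c, rotation_apply, circleMap]
  have hvol : volume (ball z r) = volume (ball (0 : ℂ) r) := by
    simp
  have key : ∀ u ∈ ball (0 : ℂ) r,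
      ENNReal.ofReal (2 * Real.pi) * ‖g z‖ₑ ^ 2 ≤
        ∫⁻ θ in Ioc (0 : ℝ) (2 * Real.pi), F (circleMap 0 1 θ * u) := by
    intro u hu
    have hu' : ‖u‖ < r := by simpa using hu
    set G : ℂ → ℂ := fun v => g (z + v * u) ^ 2 with hG
    have hmaps : ∀ v : ℂ, ‖v‖ ≤ 1 → z + v * u ∈ ball z r := by
      intro v hv
      simp only [mem_ball, dist_self_add_left, norm_mul]
      calc ‖v‖ * ‖u‖ ≤ 1 * ‖u‖ := by gcongr
        _ < r := by simpa using hu'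
    have hGd : DifferentiableOn ℂ G (closedBall 0 1) := by
      refine (hg.comp (by fun_prop) ?_).pow 2
      intro v hv
      exact hmaps v (by simpa using hv)
    have hGc : DiffContOnCl ℂ G (ball 0 |1|) := by
      refine DifferentiableOn.diffContOnCl ?_
      rw [abs_one, closure_ball _ one_ne_zero]
      exact hGd
    have hav := hGc.circleAverage
    rw [Real.circleAverage_def] at hav
    have hG0 : G 0 = g z ^ 2 := by simp [hG]
    have h2 : ∫ θ in (0 : ℝ)..2 * Real.pi, G (circleMap 0 1 θ) = (2 * Real.pi) • (g z ^ 2) := by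
      rw [← hG0, ← hav, smul_smul, mul_inv_cancel₀ (by positivity), one_smul]
    have h3 : ENNReal.ofReal (2 * Real.pi) * ‖g z‖ₑ ^ 2 =
        ‖∫ θ in (0 : ℝ)..2 * Real.pi, G (circleMap 0 1 θ)‖ₑ := by
      rw [h2, enorm_smul, enorm_pow, Real.enorm_of_nonneg (by positivity)]
    rw [h3, intervalIntegral.integral_of_le (by positivity)]
    refine (enorm_integral_le_lintegral_enorm _).trans ?_
    refine lintegral_mono fun θ => ?_
    have hn : ‖circleMap 0 1 θ‖ = 1 := by simp
    have : circleMap 0 1 θ * u ∈ ball (0 : ℂ) r := by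
      simpa [hn] using hu'
    rw [hF, Set.indicator_of_mem this, hG, enorm_pow]
  have hjoint : Measurable (fun p : ℝ × ℂ => F (circleMap 0 1 p.1 * p.2)) := by
    refine hFm.comp ?_
    fun_prop
  have hpi : ENNReal.ofReal (2 * Real.pi) ≠ 0 := by
    simp [Real.pi_pos]
  have hpi' : ENNReal.ofReal (2 * Real.pi) ≠ ⊤ := ENNReal.ofReal_ne_top
  rw [hRHS, hvol, ← ENNReal.mul_le_mul_iff_right hpi hpi']
  calc ENNReal.ofReal (2 * Real.pi) * (‖g z‖ₑ ^ 2 * volume (ball (0 : ℂ) r))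
      = ∫⁻ _u in ball (0 : ℂ) r, ENNReal.ofReal (2 * Real.pi) * ‖g z‖ₑ ^ 2 := by
        rw [setLIntegral_const, mul_assoc]
    _ ≤ ∫⁻ u in ball (0 : ℂ) r, ∫⁻ θ in Ioc (0 : ℝ) (2 * Real.pi), F (circleMap 0 1 θ * u) :=
        setLIntegral_mono' measurableSet_ball key
    _ ≤ ∫⁻ u, ∫⁻ θ in Ioc (0 : ℝ) (2 * Real.pi), F (circleMap 0 1 θ * u) :=
        setLIntegral_le_lintegral _ _
    _ = ∫⁻ θ in Ioc (0 : ℝ) (2 * Real.pi), ∫⁻ u, F (circleMap 0 1 θ * u) := by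
        rw [lintegral_lintegral_swap]
        exact (hjoint.comp measurable_swap).aemeasurable
    _ = ENNReal.ofReal (2 * Real.pi) * ∫⁻ u, F u := by
        simp_rw [hrot]
        rw [setLIntegral_const, Real.volume_Ioc, sub_zero, mul_comm]

/-- The `m`-th Taylor coefficient of `g` at `a`, as a Cauchy integral over the circle of
radius `r`. -/
def tcoef (a : ℂ) (r : ℝ) (m : ℕ) (g : ℂ → ℂ) : ℂ :=
  (2 * Real.pi * I : ℂ)⁻¹ * ∮ z in C(a, r), (z - a)⁻¹ ^ m * (z - a)⁻¹ * g z

lemma norm_tcoef_le {a : ℂ} {r A : ℝ} (hr : 0 < r) (m : ℕ) {g : ℂ → ℂ}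
    (hA : ∀ z ∈ sphere a r, ‖g z‖ ≤ A) : ‖tcoef a r m g‖ ≤ A * r⁻¹ ^ m := by
  have h1 : ∀ z ∈ sphere a r, ‖(z - a)⁻¹ ^ m * (z - a)⁻¹ * g z‖ ≤ r⁻¹ ^ m * r⁻¹ * A := by
    intro z hz
    have hz' : ‖z - a‖ = r := by simpa [dist_eq_norm] using hz
    rw [norm_mul, norm_mul, norm_pow, norm_inv, hz']
    gcongr
    exact hA z hz
  have h2 := circleIntegral.norm_two_pi_i_inv_smul_integral_le_of_norm_le_const hr.le h1
  rw [smul_eq_mul] at h2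
  refine h2.trans (le_of_eq ?_)
  field_simp

/-- If the Taylor coefficients of `g` at `a` vanish unless `2⁻ᵐ ≤ τ`, then `g` is at most
`2τ sup |g|` on the concentric disk of a quarter of the radius. -/
lemma taylor_tail {a w : ℂ} {r A τ : ℝ} (hr : 0 < r) {g : ℂ → ℂ}
    (hg : DifferentiableOn ℂ g (closedBall a r)) (hA : ∀ z ∈ sphere a r, ‖g z‖ ≤ A)
    (hw : ‖w - a‖ ≤ r / 4)
    (hτ : 0 ≤ τ) (hc : ∀ m : ℕ, τ < (1 / 2 : ℝ) ^ m → tcoef a r m g = 0) : ‖g w‖ ≤ 2 * τ * A := by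
  have hA0 : 0 ≤ A := by
    have : a + r ∈ sphere a r := by simp [hr.le]
    exact (norm_nonneg _).trans (hA _ this)
  have hci : CircleIntegrable g a r :=
    (hg.continuousOn.mono sphere_subset_closedBall).circleIntegrable hr.le
  have hw' : ‖w - a‖ < r := by linarith
  have hs := hasSum_cauchyPowerSeries_integral hci hw'
  have hcauchy : (2 * Real.pi * I : ℂ)⁻¹ • ∮ z in C(a, r), (z - (a + (w - a)))⁻¹ • g z = g w := by
    have hd : DiffContOnCl ℂ g (ball a r) := by
      refine DifferentiableOn.diffContOnCl ?_
      rwa [closure_ball _ hr.ne']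
    have hwb : w ∈ ball a r := by simpa [dist_eq_norm] using hw'
    have := hd.two_pi_i_inv_smul_circleIntegral_sub_inv_smul hwb
    simpa using this
  rw [hcauchy] at hs
  have hterm : ∀ m : ℕ, (cauchyPowerSeries g a r m fun _ => w - a) =
      (w - a) ^ m * tcoef a r m g := by
    intro m
    rw [cauchyPowerSeries_apply, tcoef, smul_eq_mul]
    rw [mul_left_comm ((w - a) ^ m), ← circleIntegral.integral_const_mul ((w - a) ^ m)]
    refine congrArg _ (congrArg (fun F : ℂ → ℂ => ∮ z in C(a, r), F z) (funext fun z => ?_))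
    simp only [smul_eq_mul, div_eq_mul_inv, mul_pow]
    ring
  have hbd : ∀ m : ℕ, ‖cauchyPowerSeries g a r m fun _ => w - a‖ ≤ τ * A * (1 / 2 : ℝ) ^ m := by
    intro m
    rw [hterm, norm_mul, norm_pow]
    rcases lt_or_ge τ ((1 / 2 : ℝ) ^ m) with h | h
    · rw [hc m h]
      simp only [norm_zero, mul_zero]
      positivity
    · calc ‖w - a‖ ^ m * ‖tcoef a r m g‖ ≤ (r / 4) ^ m * (A * r⁻¹ ^ m) := by
            gcongr
            exact norm_tcoef_le hr m hA
        _ = A * ((1 / 2 : ℝ) ^ m * (1 / 2) ^ m) := by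
            rw [← mul_pow, mul_left_comm, ← mul_pow]
            congr 2
            field_simp
            norm_num
        _ ≤ A * (τ * (1 / 2) ^ m) := by gcongr
        _ = τ * A * (1 / 2 : ℝ) ^ m := by ring
  have hgeo : HasSum (fun m : ℕ => τ * A * (1 / 2 : ℝ) ^ m) (τ * A * 2) :=
    hasSum_geometric_two.mul_left _
  have := hs.norm_le_of_bounded hgeo hbd
  linarith

/-! ### The weighted area measure and local estimates -/

/-- The weighted area measure `(σ+1)(1-|z|²)^σ dA` on the disk. -/
def nuM (σ : ℝ) : Measure ℂ :=
  (nA.restrict uD).withDensity (fun z => ENNReal.ofReal ((σ + 1) * (1 - ‖z‖ ^ 2) ^ σ))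

lemma measurable_dens (σ : ℝ) :
    Measurable (fun z : ℂ => ENNReal.ofReal ((σ + 1) * (1 - ‖z‖ ^ 2) ^ σ)) := by
  fun_prop

lemma lintegral_nuM (σ : ℝ) {F : ℂ → ℝ≥0∞} :
    ∫⁻ z, F z ∂(nuM σ) =
      ∫⁻ z in uD, ENNReal.ofReal ((σ + 1) * (1 - ‖z‖ ^ 2) ^ σ) * F z ∂nA := by
  rw [nuM, lintegral_withDensity_eq_lintegral_mul_non_measurable _ (measurable_dens σ)]
  · rfl
  · simp

lemma ae_nuM_mem (σ : ℝ) : ∀ᵐ z ∂(nuM σ), z ∈ uD :=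
  (withDensity_absolutelyContinuous _ _).ae_le (ae_restrict_mem isOpen_uD.measurableSet)

lemma eDNormSqW_eq {σ : ℝ} (hσ : -1 < σ) (f : ℂ → ℂ) :
    eDNormSqW σ f = ENNReal.ofReal (‖f 0‖ ^ 2) + ∫⁻ z, ‖deriv f z‖ₑ ^ 2 ∂(nuM σ) := by
  rw [eDNormSqW, lintegral_nuM]
  congr 1
  refine setLIntegral_congr_fun isOpen_uD.measurableSet fun z hz => ?_
  have h1 : 0 ≤ (1 - ‖z‖ ^ 2) := by
    have := mem_uD.1 hz
    nlinarith [norm_nonneg z]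
  have h2 : ‖deriv f z‖ₑ ^ 2 = ENNReal.ofReal (‖deriv f z‖ ^ 2) := by
    rw [← ofReal_norm, ENNReal.ofReal_pow (norm_nonneg _)]
  rw [h2, ← ENNReal.ofReal_mul]
  · congr 1
    ring
  · exact mul_nonneg (by linarith) (Real.rpow_nonneg h1 _)

lemma eDNormSqW_eq' {σ : ℝ} (hσ : -1 < σ) {f : ℂ → ℂ} (h0 : f 0 = 0) :
    eDNormSqW σ f = ∫⁻ z, ‖deriv f z‖ₑ ^ 2 ∂(nuM σ) := by
  simp [eDNormSqW_eq hσ, h0]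

/-- `‖f ∘ φ‖²` as an integral of `|f'|² ∘ φ` against the measure `|φ'|² dν`. -/
lemma eDNormSqW_comp {σ : ℝ} (hσ : -1 < σ) {φ f : ℂ → ℂ} (hφ : IsSchur φ) (h0 : φ 0 = 0)
    (hf : DifferentiableOn ℂ f uD) (hf0 : f 0 = 0) :
    eDNormSqW σ (compOp φ f) =
      ∫⁻ z, ‖deriv f (φ z)‖ₑ ^ 2 * ‖deriv φ z‖ₑ ^ 2 ∂(nuM σ) := by
  rw [eDNormSqW_eq' hσ (by simp [compOp, h0, hf0])]
  refine lintegral_congr_ae ?_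
  filter_upwards [ae_nuM_mem σ] with z hz
  have h1 : DifferentiableAt ℂ f (φ z) := hf.differentiableAt (isOpen_uD.mem_nhds (hφ.2 hz))
  have h2 : DifferentiableAt ℂ φ z := hφ.1.differentiableAt (isOpen_uD.mem_nhds hz)
  have : deriv (compOp φ f) z = deriv f (φ z) * deriv φ z := deriv_comp z h1 h2
  rw [this, enorm_mul, mul_pow]

lemma ball_sub_uD {a : ℂ} {h : ℝ} (ha : h / 2 < 1 - ‖a‖) : ball a (h / 4) ⊆ uD := by
  intro z hz
  rw [mem_uD]
  have h1 : ‖z - a‖ < h / 4 := by simpa [dist_eq_norm] using hz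
  have h2 : ‖z‖ ≤ ‖z - a‖ + ‖a‖ := by simpa using norm_add_le (z - a) a
  have h3 : 0 ≤ ‖z - a‖ := norm_nonneg _
  linarith

lemma ball_bounds {a z : ℂ} {h : ℝ} (ha : h / 2 < 1 - ‖a‖) (ha' : 1 - ‖a‖ ≤ h)
    (hz : z ∈ ball a (h / 4)) : h / 4 < 1 - ‖z‖ ∧ 1 - ‖z‖ < 5 * h / 4 := by
  have h1 : ‖z - a‖ < h / 4 := by simpa [dist_eq_norm] using hz
  have h2 : ‖z‖ ≤ ‖z - a‖ + ‖a‖ := by simpa using norm_add_le (z - a) a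
  have h3 : ‖a‖ ≤ ‖z - a‖ + ‖z‖ := by
    have := norm_add_le (a - z) z
    rw [norm_sub_rev a z] at this
    simpa using this
  constructor <;> linarith

/-- Lower bound for the power `x ^ σ` on an interval, with either sign of `σ`. -/
lemma rpow_lower {σ x h : ℝ} (hh : 0 < h) (h1 : h / 4 ≤ x) (h2 : x ≤ 5 * h / 2) :
    min ((1 / 4 : ℝ) ^ σ) ((5 / 2 : ℝ) ^ σ) * h ^ σ ≤ x ^ σ := by
  have hx : 0 < x := by linarith
  rcases le_total 0 σ with hs | hs
  · calc min ((1 / 4 : ℝ) ^ σ) ((5 / 2 : ℝ) ^ σ) * h ^ σ ≤ (1 / 4 : ℝ) ^ σ * h ^ σ := by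
          gcongr
          exact min_le_left _ _
      _ = (1 / 4 * h) ^ σ := by rw [Real.mul_rpow (by norm_num) hh.le]
      _ ≤ x ^ σ := Real.rpow_le_rpow (by positivity) (by linarith) hs
  · calc min ((1 / 4 : ℝ) ^ σ) ((5 / 2 : ℝ) ^ σ) * h ^ σ ≤ (5 / 2 : ℝ) ^ σ * h ^ σ := by
          gcongr
          exact min_le_right _ _
      _ = (5 / 2 * h) ^ σ := by rw [Real.mul_rpow (by norm_num) hh.le]
      _ ≤ x ^ σ := Real.rpow_le_rpow_of_nonpos hx (by linarith) hs

/-- The constant comparing area measure with `nuM σ` on Whitney disks. -/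
def cmpC (σ : ℝ) : ℝ := (σ + 1) * min ((1 / 4 : ℝ) ^ σ) ((5 / 2 : ℝ) ^ σ) / Real.pi

lemma cmpC_pos {σ : ℝ} (hσ : -1 < σ) : 0 < cmpC σ := by
  have : 0 < σ + 1 := by linarith
  have h1 : (0 : ℝ) < (1 / 4 : ℝ) ^ σ := by positivity
  have h2 : (0 : ℝ) < (5 / 2 : ℝ) ^ σ := by positivity
  have := lt_min h1 h2
  unfold cmpC
  positivity

/-- On a Whitney disk of scale `h` the weighted measure dominates `h^σ` times area. -/
lemma vol_le_nuM {σ : ℝ} (hσ : -1 < σ) {a : ℂ} {h : ℝ} (hh : 0 < h) (ha : h / 2 < 1 - ‖a‖)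
    (ha' : 1 - ‖a‖ ≤ h) (F : ℂ → ℝ≥0∞) :
    ENNReal.ofReal (cmpC σ * h ^ σ) * ∫⁻ z in ball a (h / 4), F z ≤
      ∫⁻ z in ball a (h / 4), F z ∂(nuM σ) := by
  have e1 : ∫⁻ z in ball a (h / 4), F z ∂(nuM σ) = ∫⁻ z in ball a (h / 4),
      ENNReal.ofReal ((σ + 1) * (1 - ‖z‖ ^ 2) ^ σ) * F z ∂nA := by
    rw [nuM, restrict_withDensity measurableSet_ball, Measure.restrict_restrict measurableSet_ball,
      inter_eq_left.2 (ball_sub_uD ha),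
      lintegral_withDensity_eq_lintegral_mul_non_measurable _ (measurable_dens σ)]
    · rfl
    · simp
  rw [e1, nA, Measure.restrict_smul, lintegral_smul_measure,
    ← lintegral_const_mul' _ _ ENNReal.ofReal_ne_top, smul_eq_mul, ← lintegral_const_mul']
  · refine setLIntegral_mono' measurableSet_ball fun z hz => ?_
    rw [← mul_assoc]
    gcongr
    rw [← ENNReal.ofReal_inv_of_pos Real.pi_pos, ← ENNReal.ofReal_mul (by positivity)]
    refine ENNReal.ofReal_le_ofReal ?_
    obtain ⟨b1, b2⟩ := ball_bounds ha ha' hz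
    have hz1 := mem_uD.1 (ball_sub_uD ha hz)
    have hn := norm_nonneg z
    have := rpow_lower (σ := σ) (x := 1 - ‖z‖ ^ 2) hh (by nlinarith) (by nlinarith)
    have h1 : 0 < σ + 1 := by linarith
    calc cmpC σ * h ^ σ = Real.pi⁻¹ * ((σ + 1) *
          (min ((1 / 4 : ℝ) ^ σ) ((5 / 2 : ℝ) ^ σ) * h ^ σ)) := by
          unfold cmpC; field_simp
      _ ≤ _ := by gcongr
  · rw [ENNReal.inv_ne_top]
    simp [Real.pi_pos]

/-- The constant in the pointwise estimate `norm_sq_le_sphere`. -/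
def ptC (σ : ℝ) : ℝ := 64 / (Real.pi * cmpC σ)

lemma ptC_pos {σ : ℝ} (hσ : -1 < σ) : 0 < ptC σ := by
  have := cmpC_pos hσ
  unfold ptC
  positivity

/-- Pointwise bound for `|g|²` near the centre of a Whitney disk by its weighted `L²` norm over
the disk. -/
lemma norm_sq_le_sphere {σ : ℝ} (hσ : -1 < σ) {a z : ℂ} {h : ℝ} (hh : 0 < h)
    (ha : h / 2 < 1 - ‖a‖) (ha' : 1 - ‖a‖ ≤ h) {g : ℂ → ℂ} (hg : DifferentiableOn ℂ g uD)
    (hz : ‖z - a‖ ≤ h / 8) :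
    ‖g z‖ₑ ^ 2 ≤ ENNReal.ofReal (ptC σ * h ^ (-(2 + σ))) *
      ∫⁻ u in ball a (h / 4), ‖g u‖ₑ ^ 2 ∂(nuM σ) := by
  have hsub : ball z (h / 8) ⊆ ball a (h / 4) := by
    refine ball_subset_ball' ?_
    rw [dist_eq_norm]; linarith
  have hmv := mean_value_sq (hg.mono (hsub.trans (ball_sub_uD ha)))
  have h1 := hmv.trans (lintegral_mono_set hsub)
  have h2 := vol_le_nuM hσ hh ha ha' (fun u => ‖g u‖ₑ ^ 2)
  have hc := cmpC_pos hσ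
  have h3 : ENNReal.ofReal (cmpC σ * h ^ σ) * (‖g z‖ₑ ^ 2 * volume (ball z (h / 8))) ≤
      ∫⁻ u in ball a (h / 4), ‖g u‖ₑ ^ 2 ∂(nuM σ) := le_trans (by gcongr) h2
  have hvol : volume (ball z (h / 8)) = ENNReal.ofReal (Real.pi * (h / 8) ^ 2) := by
    rw [Complex.volume_ball, mul_comm, ENNReal.ofReal_mul Real.pi_pos.le,
      ENNReal.ofReal_pow (by positivity)]
    congr 1
    rw [← NNReal.coe_real_pi, ENNReal.ofReal_coe_nnreal]
  calc ‖g z‖ₑ ^ 2 = ENNReal.ofReal (ptC σ * h ^ (-(2 + σ))) *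
        (ENNReal.ofReal (cmpC σ * h ^ σ) * (‖g z‖ₑ ^ 2 * volume (ball z (h / 8)))) := by
        rw [hvol, mul_left_comm _ (‖g z‖ₑ ^ 2), mul_left_comm _ (‖g z‖ₑ ^ 2),
          ← ENNReal.ofReal_mul (by positivity),
          ← ENNReal.ofReal_mul (mul_nonneg (ptC_pos hσ).le (by positivity))]
        have : ptC σ * h ^ (-(2 + σ)) * (cmpC σ * h ^ σ * (Real.pi * (h / 8) ^ 2)) = 1 := by
          rw [Real.rpow_neg hh.le, Real.rpow_add hh]
          unfold ptC
          have : h ^ σ ≠ 0 := (Real.rpow_pos_of_pos hh _).ne'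
          have h22 : h ^ (2 : ℝ) = h ^ 2 := by norm_cast
          rw [h22]
          field_simp
          norm_num
        rw [this]; simp
    _ ≤ _ := by gcongr

/-- Local estimate on a Whitney cell: if the Taylor coefficients of `g` at the centre vanish
unless `4⁻ᵐ ≤ τ`, the pointwise bound of `norm_sq_le_sphere` gains the factor `4τ`. -/
lemma local_est {σ : ℝ} (hσ : -1 < σ) {a w : ℂ} {h τ : ℝ} (hh : 0 < h)
    (ha : h / 2 < 1 - ‖a‖) (ha' : 1 - ‖a‖ ≤ h) {g : ℂ → ℂ} (hg : DifferentiableOn ℂ g uD)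
    (hfin : ∫⁻ u in ball a (h / 4), ‖g u‖ₑ ^ 2 ∂(nuM σ) ≠ ⊤) (hw : ‖w - a‖ ≤ h / 32)
    (hτ : 0 ≤ τ) (hc : ∀ m : ℕ, τ < (1 / 4 : ℝ) ^ m → tcoef a (h / 8) m g = 0) :
    ‖g w‖ₑ ^ 2 ≤ ENNReal.ofReal (4 * τ) * (ENNReal.ofReal (ptC σ * h ^ (-(2 + σ))) *
      ∫⁻ u in ball a (h / 4), ‖g u‖ₑ ^ 2 ∂(nuM σ)) := by
  set Q := ENNReal.ofReal (ptC σ * h ^ (-(2 + σ))) *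
      ∫⁻ u in ball a (h / 4), ‖g u‖ₑ ^ 2 ∂(nuM σ) with hQ
  have hQt : Q ≠ ⊤ := ENNReal.mul_ne_top ENNReal.ofReal_ne_top hfin
  have hconv : ∀ x : ℂ, ‖x‖ₑ ^ 2 = ENNReal.ofReal (‖x‖ ^ 2) := fun x => by
    rw [← ofReal_norm, ENNReal.ofReal_pow (norm_nonneg _)]
  have hA : ∀ z ∈ sphere a (h / 8), ‖g z‖ ≤ Real.sqrt Q.toReal := by
    intro z hz
    have hz' : ‖z - a‖ ≤ h / 8 := by
      have : dist z a = h / 8 := hz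
      rw [dist_eq_norm] at this
      exact this.le
    have := norm_sq_le_sphere hσ hh ha ha' hg hz'
    rw [← hQ, hconv, ENNReal.ofReal_le_iff_le_toReal hQt] at this
    exact Real.le_sqrt_of_sq_le this
  have hsub : closedBall a (h / 8) ⊆ uD :=
    (closedBall_subset_ball (by linarith)).trans (ball_sub_uD ha)
  have key := taylor_tail (w := w) (τ := Real.sqrt τ) (by positivity : 0 < h / 8) (hg.mono hsub) hA
    (by linarith) (Real.sqrt_nonneg _) (by
      intro m hm
      refine hc m ?_
      rw [Real.sqrt_lt' (by positivity), ← pow_mul, mul_comm, pow_mul] at hm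
      norm_num at hm ⊢
      exact hm)
  rw [hconv, ENNReal.ofReal_le_iff_le_toReal (ENNReal.mul_ne_top ENNReal.ofReal_ne_top hQt),
    ENNReal.toReal_mul, ENNReal.toReal_ofReal (by positivity)]
  calc ‖g w‖ ^ 2 ≤ (2 * Real.sqrt τ * Real.sqrt Q.toReal) ^ 2 := by gcongr
    _ = 4 * (Real.sqrt τ) ^ 2 * (Real.sqrt Q.toReal) ^ 2 := by ring
    _ = 4 * τ * Q.toReal := by
      rw [Real.sq_sqrt hτ, Real.sq_sqrt ENNReal.toReal_nonneg]

/-! ### A Whitney decomposition of the disk -/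

/-- The dyadic level of a point of the disk: `2⁻ⁿ⁻¹ < 1 - |z| ≤ 2⁻ⁿ` for `n = lev z`. -/
def lev (z : ℂ) : ℕ := ⌊Real.logb 2 (1 - ‖z‖)⁻¹⌋₊

/-- The Whitney cell of `z`: its level, and the square of side `2⁻ⁿ/64` containing it. -/
def idx (z : ℂ) : ℕ × ℤ × ℤ :=
  (lev z, ⌊z.re / ((1 / 2 : ℝ) ^ lev z / 64)⌋, ⌊z.im / ((1 / 2 : ℝ) ^ lev z / 64)⌋)

/-- The nonempty Whitney cells. -/
abbrev WI : Type := ↥(idx '' uD)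

/-- The scale `2⁻ⁿ` of a cell of level `n`. -/
def hh (i : WI) : ℝ := (1 / 2 : ℝ) ^ i.1.1

/-- A chosen point of the cell, which plays the role of its centre. -/
def cen (i : WI) : ℂ := i.2.choose

lemma hh_pos (i : WI) : 0 < hh i := by unfold hh; positivity

lemma cen_mem (i : WI) : cen i ∈ uD := i.2.choose_spec.1

lemma idx_cen (i : WI) : idx (cen i) = i.1 := i.2.choose_spec.2

lemma lev_spec {z : ℂ} (hz : z ∈ uD) :
    (1 / 2 : ℝ) ^ lev z / 2 < 1 - ‖z‖ ∧ 1 - ‖z‖ ≤ (1 / 2 : ℝ) ^ lev z := by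
  have h1 : 0 < 1 - ‖z‖ := by have := mem_uD.1 hz; linarith
  have h2 : 1 ≤ (1 - ‖z‖)⁻¹ := (one_le_inv₀ h1).2 (by linarith [norm_nonneg z])
  have h3 : 0 ≤ Real.logb 2 (1 - ‖z‖)⁻¹ := Real.logb_nonneg (by norm_num) h2
  have h4 : (lev z : ℝ) ≤ Real.logb 2 (1 - ‖z‖)⁻¹ := Nat.floor_le h3
  have h5 : Real.logb 2 (1 - ‖z‖)⁻¹ < lev z + 1 := Nat.lt_floor_add_one _
  rw [Real.le_logb_iff_rpow_le (by norm_num) (by positivity), Real.rpow_natCast] at h4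
  have h5' : Real.logb 2 (1 - ‖z‖)⁻¹ < ((lev z + 1 : ℕ) : ℝ) := by exact_mod_cast h5
  rw [Real.logb_lt_iff_lt_rpow (by norm_num) (by positivity), Real.rpow_natCast] at h5'
  constructor
  · rw [inv_lt_comm₀ h1 (by positivity)] at h5'
    rw [one_div, inv_pow, pow_succ, mul_inv] at *
    linarith
  · rw [le_inv_comm₀ (by positivity) h1] at h4
    rwa [one_div, inv_pow]

lemma cen_lo (i : WI) : hh i / 2 < 1 - ‖cen i‖ := by
  have := (lev_spec (cen_mem i)).1
  have h : lev (cen i) = i.1.1 := congrArg Prod.fst (idx_cen i)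
  rwa [h] at this

lemma cen_hi (i : WI) : 1 - ‖cen i‖ ≤ hh i := by
  have := (lev_spec (cen_mem i)).2
  have h : lev (cen i) = i.1.1 := congrArg Prod.fst (idx_cen i)
  rwa [h] at this

lemma cell_hi {w : ℂ} (hw : w ∈ uD) {i : WI} (hi : idx w = i.1) : 1 - ‖w‖ ≤ hh i := by
  have h : lev w = i.1.1 := congrArg Prod.fst hi
  have := (lev_spec hw).2
  rwa [h] at this

lemma cell_dist {w : ℂ} {i : WI} (hi : idx w = i.1) : ‖w - cen i‖ ≤ hh i / 32 := by
  have h1 : lev w = i.1.1 := congrArg Prod.fst hi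
  have h2 : lev (cen i) = i.1.1 := congrArg Prod.fst (idx_cen i)
  have e := hi.trans (idx_cen i).symm
  have e1 : ⌊w.re / (hh i / 64)⌋ = ⌊(cen i).re / (hh i / 64)⌋ := by
    have := congrArg (fun x => x.2.1) e
    simpa only [idx, hh, h1, h2] using this
  have e2 : ⌊w.im / (hh i / 64)⌋ = ⌊(cen i).im / (hh i / 64)⌋ := by
    have := congrArg (fun x => x.2.2) e
    simpa only [idx, hh, h1, h2] using this
  have hp : 0 < hh i / 64 := by have := hh_pos i; positivity
  have a1 := Int.abs_sub_lt_one_of_floor_eq_floor e1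
  have a2 := Int.abs_sub_lt_one_of_floor_eq_floor e2
  rw [← sub_div, abs_div, abs_of_pos hp, div_lt_one hp] at a1 a2
  have := Complex.norm_le_abs_re_add_abs_im (w - cen i)
  simp only [sub_re, sub_im] at this
  linarith

lemma measurable_lev : Measurable lev := by
  unfold lev
  refine Nat.measurable_floor.comp ?_
  unfold Real.logb
  fun_prop

lemma measurable_idx : Measurable idx := by
  have := measurable_lev
  have h : Measurable fun z => (1 / 2 : ℝ) ^ lev z / 64 := by
    have : Measurable fun z => (1 / 2 : ℝ) ^ lev z :=
      (measurable_from_top (f := fun n : ℕ => (1 / 2 : ℝ) ^ n)).comp measurable_lev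
    fun_prop
  refine measurable_lev.prodMk (Measurable.prodMk ?_ ?_)
  · exact Int.measurable_floor.comp (Complex.measurable_re.div h)
  · exact Int.measurable_floor.comp (Complex.measurable_im.div h)

/-- The finitely many indices whose Whitney disk may contain `z`. -/
def nbr (z : ℂ) : Finset (ℕ × ℤ × ℤ) :=
  (Finset.Icc (lev z - 1) (lev z + 1)).biUnion fun n =>
    {n} ×ˢ ((Finset.Icc (⌊z.re / ((1 / 2 : ℝ) ^ n / 64)⌋ - 17) (⌊z.re / ((1 / 2 : ℝ) ^ n / 64)⌋ + 17)) ×ˢ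
    (Finset.Icc (⌊z.im / ((1 / 2 : ℝ) ^ n / 64)⌋ - 17) (⌊z.im / ((1 / 2 : ℝ) ^ n / 64)⌋ + 17)))

lemma card_nbr (z : ℂ) : (nbr z).card ≤ 3675 := by
  unfold nbr
  refine (Finset.card_biUnion_le_card_mul _ _ 1225 ?_).trans ?_
  · intro n _
    simp only [Finset.card_product, Finset.card_singleton, Int.card_Icc]
    apply le_of_eq
    have : ∀ k : ℤ, (k + 17 + 1 - (k - 17)).toNat = 35 := fun k => by
      have : k + 17 + 1 - (k - 17) = 35 := by ring
      rw [this]; rfl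
    simp [this]
  · simp only [Nat.card_Icc]
    omega

lemma floor_near {x y c : ℝ} (hc : 0 < c) (h : |x - y| < 16 * c) :
    ⌊x / c⌋ ∈ Finset.Icc (⌊y / c⌋ - 17) (⌊y / c⌋ + 17) := by
  have h1 : |x / c - y / c| < 16 := by
    rw [← sub_div, abs_div, abs_of_pos hc, div_lt_iff₀ hc]; exact h
  rw [abs_lt] at h1
  have a1 := Int.floor_le (x / c)
  have a2 := Int.lt_floor_add_one (x / c)
  have a3 := Int.floor_le (y / c)
  have a4 := Int.lt_floor_add_one (y / c)
  rw [Finset.mem_Icc]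
  constructor
  · have : ((⌊y / c⌋ - 17 : ℤ) : ℝ) ≤ (⌊x / c⌋ : ℤ) := by push_cast; linarith
    exact_mod_cast this
  · have : ((⌊x / c⌋ : ℤ) : ℝ) ≤ (⌊y / c⌋ + 17 : ℤ) := by push_cast; linarith
    exact_mod_cast this

lemma mem_nbr {z : ℂ} {i : WI} (hz : z ∈ ball (cen i) (hh i / 4)) : i.1 ∈ nbr z := by
  obtain ⟨b1, b2⟩ := ball_bounds (cen_lo i) (cen_hi i) hz
  have hzu := ball_sub_uD (cen_lo i) hz
  obtain ⟨l1, l2⟩ := lev_spec hzu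
  have hlev : lev (cen i) = i.1.1 := congrArg Prod.fst (idx_cen i)
  have hd : ‖z - cen i‖ < hh i / 4 := by simpa [dist_eq_norm] using hz
  have c1 : lev z - 1 ≤ i.1.1 := by
    by_contra hcon
    have : i.1.1 + 2 ≤ lev z := by omega
    have := pow_le_pow_of_le_one (by norm_num : (0 : ℝ) ≤ 1 / 2) (by norm_num) this
    rw [pow_add] at this
    unfold hh at b1
    linarith
  have c2 : i.1.1 ≤ lev z + 1 := by
    by_contra hcon
    have : lev z + 2 ≤ i.1.1 := by omega
    have := pow_le_pow_of_le_one (by norm_num : (0 : ℝ) ≤ 1 / 2) (by norm_num) this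
    rw [pow_add] at this
    have h4 : 0 < (1 / 2 : ℝ) ^ lev z := by positivity
    unfold hh at b2
    linarith
  have hi := idx_cen i
  have e1 : ⌊(cen i).re / (hh i / 64)⌋ = i.1.2.1 := by
    have := congrArg (fun x => x.2.1) hi
    simpa only [idx, hh, hlev] using this
  have e2 : ⌊(cen i).im / (hh i / 64)⌋ = i.1.2.2 := by
    have := congrArg (fun x => x.2.2) hi
    simpa only [idx, hh, hlev] using this
  have hp : 0 < hh i / 64 := by have := hh_pos i; positivity
  unfold nbr
  rw [Finset.mem_biUnion]
  refine ⟨i.1.1, Finset.mem_Icc.2 ⟨c1, c2⟩, ?_⟩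
  rw [norm_sub_rev] at hd
  have d1 := (Complex.abs_re_le_norm (cen i - z)).trans_lt hd
  have d2 := (Complex.abs_im_le_norm (cen i - z)).trans_lt hd
  rw [Finset.mem_product, Finset.mem_product]
  refine ⟨by simp, ?_, ?_⟩
  · rw [← e1]
    exact floor_near hp (by rw [← sub_re]; change _ < 16 * (hh i / 64); linarith)
  · rw [← e2]
    exact floor_near hp (by rw [← sub_im]; change _ < 16 * (hh i / 64); linarith)

/-- Bounded overlap of the Whitney disks. -/
lemma overlap (μ : Measure ℂ) {F : ℂ → ℝ≥0∞} (hF : Measurable F) :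
    ∑' i : WI, ∫⁻ z in ball (cen i) (hh i / 4), F z ∂μ ≤ 3675 * ∫⁻ z, F z ∂μ := by
  simp_rw [← lintegral_indicator measurableSet_ball]
  rw [← lintegral_tsum (fun i => (hF.indicator measurableSet_ball).aemeasurable),
    ← lintegral_const_mul _ hF]
  refine lintegral_mono fun z => ?_
  classical
  let s : Finset WI := (nbr z).subtype (fun x => x ∈ idx '' uD)
  have h1 : ∀ i ∉ s, (ball (cen i) (hh i / 4)).indicator F z = 0 := by
    intro i hi
    refine indicator_of_notMem (fun hz => hi ?_) _
    simpa [s] using mem_nbr hz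
  rw [tsum_eq_sum h1]
  have hs : s.card ≤ 3675 := by
    refine le_trans ?_ (card_nbr z)
    rw [Finset.card_subtype]
    exact Finset.card_filter_le _ _
  calc ∑ i ∈ s, (ball (cen i) (hh i / 4)).indicator F z ≤ ∑ i ∈ s, F z :=
        Finset.sum_le_sum fun i _ => indicator_le_self _ _ _
    _ = s.card * F z := by simp
    _ ≤ 3675 * F z := by
      gcongr
      exact_mod_cast hs

/-- The part of the disk which `φ` maps into the cell `i`. -/
def pre (φ : ℂ → ℂ) (i : WI) : Set ℂ := {z ∈ uD | idx (φ z) = i.1}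

lemma measurableSet_pre {φ : ℂ → ℂ} (hφ : IsSchur φ) (i : WI) : MeasurableSet (pre φ i) := by
  have h1 : Measurable (uD.domRestrict φ) := hφ.1.continuousOn.domRestrict.measurable
  have h2 : MeasurableSet ((uD.domRestrict φ) ⁻¹' (idx ⁻¹' {i.1})) :=
    h1 (measurable_idx (measurableSet_singleton _))
  have h3 := isOpen_uD.measurableSet.subtype_image h2
  convert h3 using 1
  ext z
  simp [pre, Set.domRestrict, and_comm]

lemma pairwise_pre (φ : ℂ → ℂ) : Pairwise (Function.onFun Disjoint (pre φ)) := by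
  intro i j hij
  refine Set.disjoint_left.2 fun z hz hz' => hij ?_
  exact Subtype.ext (hz.2.symm.trans hz'.2)

lemma iUnion_pre {φ : ℂ → ℂ} (hφ : IsSchur φ) : ⋃ i, pre φ i = uD := by
  ext z
  simp only [mem_iUnion, pre, mem_ofPred_eq]
  constructor
  · rintro ⟨i, hi, -⟩; exact hi
  · intro hz
    exact ⟨⟨idx (φ z), mem_image_of_mem _ (hφ.2 hz)⟩, hz, rfl⟩

lemma lintegral_pre {φ : ℂ → ℂ} (hφ : IsSchur φ) (σ : ℝ) (G : ℂ → ℝ≥0∞) :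
    ∫⁻ z, G z ∂(nuM σ) = ∑' i, ∫⁻ z in pre φ i, G z ∂(nuM σ) := by
  rw [← lintegral_iUnion (measurableSet_pre hφ) (pairwise_pre φ), iUnion_pre hφ,
    Measure.restrict_eq_self_of_ae_mem (ae_nuM_mem σ)]

/-! ### Test functions -/

/-- The weighted measure is finite; this is where `σ > -1` enters. -/
lemma nuM_univ {σ : ℝ} (hσ : -1 < σ) : nuM σ univ ≠ ⊤ := by
  have hs : 0 < σ + 1 := by linarith
  have h1 : IntegrableOn (fun y : ℝ => y * (1 - y ^ 2) ^ σ) (Ioo 0 1) := by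
    have hc : ContinuousOn (fun y : ℝ => -((1 - y ^ 2) ^ (σ + 1)) / (2 * (σ + 1))) (Icc 0 1) := by
      refine ContinuousOn.div_const (ContinuousOn.neg ?_) _
      refine ContinuousOn.rpow_const (by fun_prop) fun x _ => Or.inr hs.le
    refine (intervalIntegral.integrableOn_deriv_of_nonneg hc (fun y hy => ?_)
      (fun y hy => ?_)).mono_set Ioo_subset_Ioc_self
    · have hy1 : 1 - y ^ 2 ≠ 0 := by nlinarith [hy.1, hy.2]
      have hd : HasDerivAt (fun y : ℝ => 1 - y ^ 2) (-(2 * y)) y := by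
        simpa using ((hasDerivAt_id y).pow 2).const_sub 1
      have := ((hd.rpow_const (p := σ + 1) (Or.inl hy1)).neg).div_const (2 * (σ + 1))
      refine HasDerivAt.congr_deriv this ?_
      rw [add_sub_cancel_right]
      field_simp
    · exact mul_nonneg hy.1.le (Real.rpow_nonneg (by nlinarith [hy.1, hy.2]) _)
  have h2 : IntegrableOn (fun x : ℂ => (1 - ‖x‖ ^ 2) ^ σ) (ball (0 : ℂ) 1) volume := by
    rw [integrableOn_fun_norm_addHaar volume (f := fun y : ℝ => (1 - y ^ 2) ^ σ)]
    simpa using h1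
  have h3 : ∫⁻ x in uD, ENNReal.ofReal ((σ + 1) * (1 - ‖x‖ ^ 2) ^ σ) ≠ ⊤ :=
    ((h2.const_mul (σ + 1)).lintegral_lt_top).ne
  have := lintegral_nuM σ (F := fun _ => 1)
  simp only [lintegral_one, mul_one] at this
  rw [this, nA, Measure.restrict_smul, lintegral_smul_measure, smul_eq_mul]
  refine ENNReal.mul_ne_top ?_ h3
  rw [ENNReal.inv_ne_top]
  simp [Real.pi_pos]

lemma det_mulC (c : ℂ) :
    ((ContinuousLinearMap.toSpanSingleton ℂ c).restrictScalars ℝ).det = ‖c‖ ^ 2 := by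
  rw [ContinuousLinearMap.det]
  have : (((ContinuousLinearMap.toSpanSingleton ℂ c).restrictScalars ℝ : ℂ →L[ℝ] ℂ) : ℂ →ₗ[ℝ] ℂ)
     = LinearMap.mul ℝ ℂ c := by
    ext x; simp [mul_comm]
  rw [this, ← LinearMap.det_toMatrix Complex.basisOneI, Matrix.det_fin_two]
  simp [LinearMap.toMatrix_apply, ← Complex.normSq_eq_norm_sq, Complex.normSq_apply]

lemma mob_aux {a z : ℂ} (ha : ‖a‖ < 1) (hz : ‖z‖ < 1) : 0 < (1 - (starRingEnd ℂ) a * z).re := by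
  have h1 : ‖(starRingEnd ℂ) a * z‖ < 1 := by
    rw [norm_mul, RCLike.norm_conj]
    nlinarith [norm_nonneg a, norm_nonneg z]
  have := (Complex.re_le_norm ((starRingEnd ℂ) a * z))
  simp only [sub_re, one_re]
  linarith

/-- The identity `1 - |ψ(z)|² = (1-|a|²)(1-|z|²)/|1-āz|²` for the disk automorphism `ψ`. -/
lemma mob_id {a z : ℂ} (ha : ‖a‖ < 1) (hz : ‖z‖ < 1) :
    1 - ‖(a - z) / (1 - (starRingEnd ℂ) a * z)‖ ^ 2 =
      (1 - ‖a‖ ^ 2) * (1 - ‖z‖ ^ 2) / ‖1 - (starRingEnd ℂ) a * z‖ ^ 2 := by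
  have h0 : 1 - (starRingEnd ℂ) a * z ≠ 0 := fun h => by
    have := mob_aux ha hz
    rw [h] at this
    simp at this
  have h1 : ‖1 - (starRingEnd ℂ) a * z‖ ^ 2 ≠ 0 := by simpa using h0
  rw [norm_div, div_pow, eq_div_iff h1, sub_mul, div_mul_cancel₀ _ h1]
  simp only [← Complex.normSq_eq_norm_sq, Complex.normSq_apply, sub_re, sub_im, one_re, one_im,
    mul_re, mul_im, conj_re, conj_im]
  ring

/-- The derivative of the test function at `a`, the normalized kernel
`(1-|a|²)^{(2+σ)/2} / (1-āz)^{2+σ}`. -/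
def gk (σ : ℝ) (a z : ℂ) : ℂ :=
  (((1 - ‖a‖ ^ 2) ^ ((2 + σ) / 2) : ℝ) : ℂ) * (1 - (starRingEnd ℂ) a * z) ^ ((-(2 + σ) : ℝ) : ℂ)

lemma norm_gk_sq {σ : ℝ} {a z : ℂ} (ha : ‖a‖ < 1) :
    ‖gk σ a z‖ ^ 2 = (1 - ‖a‖ ^ 2) ^ (2 + σ) * (‖1 - (starRingEnd ℂ) a * z‖ ^ 2) ^ (-(2 + σ)) := by
  have h1 : 0 ≤ 1 - ‖a‖ ^ 2 := by nlinarith [norm_nonneg a]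
  rw [gk, norm_mul, mul_pow, Complex.norm_cpow_real, Complex.norm_real, Real.norm_eq_abs,
    abs_of_nonneg (Real.rpow_nonneg h1 _), ← Real.rpow_mul_natCast h1,
    ← Real.rpow_mul_natCast (norm_nonneg _), ← Real.rpow_natCast ‖1 - _‖, ← Real.rpow_mul (norm_nonneg _)]
  congr 2 <;> push_cast <;> ring

lemma differentiableOn_gk {σ : ℝ} {a : ℂ} (ha : ‖a‖ < 1) : DifferentiableOn ℂ (gk σ a) uD := by
  intro z hz
  refine DifferentiableAt.differentiableWithinAt ?_
  unfold gk
  refine DifferentiableAt.const_mul (DifferentiableAt.cpow_const (by fun_prop) ?_) _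
  exact Or.inl (mob_aux ha (mem_uD.1 hz))

/-- The kernels `gk σ a` are bounded in the weighted `L²` space uniformly in `a`: the disk
automorphism exchanging `0` and `a` transports `|gk σ a|² dν_σ` to `dν_σ`. -/
lemma lintegral_gk {σ : ℝ} (hσ : -1 < σ) {a : ℂ} (ha : ‖a‖ < 1) :
    ∫⁻ z, ‖gk σ a z‖ₑ ^ 2 ∂(nuM σ) ≤ nuM σ univ := by
  set ψ : ℂ → ℂ := fun z => (a - z) / (1 - (starRingEnd ℂ) a * z) with hψ
  set W : ℂ → ℝ≥0∞ := fun z => ENNReal.ofReal ((σ + 1) * (1 - ‖z‖ ^ 2) ^ σ) with hW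
  have hne : ∀ z ∈ uD, 1 - (starRingEnd ℂ) a * z ≠ 0 := fun z hz h => by
    have := mob_aux ha (mem_uD.1 hz)
    rw [h] at this
    simp at this
  have ha2 : 0 < 1 - ‖a‖ ^ 2 := by nlinarith [norm_nonneg a]
  have hd : ∀ z ∈ uD, HasDerivAt ψ (-((1 - ‖a‖ ^ 2 : ℝ) : ℂ) / (1 - (starRingEnd ℂ) a * z) ^ 2) z := by
    intro z hz
    have n1 : HasDerivAt (fun z => a - z) (-1) z := by simpa using (hasDerivAt_id z).const_sub a
    have n2 : HasDerivAt (fun z => 1 - (starRingEnd ℂ) a * z) (-((starRingEnd ℂ) a)) z := by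
      simpa using ((hasDerivAt_id z).const_mul ((starRingEnd ℂ) a)).const_sub 1
    refine HasDerivAt.congr_deriv (n1.div n2 (hne z hz)) ?_
    congr 1
    have : ((‖a‖ ^ 2 : ℝ) : ℂ) = (starRingEnd ℂ) a * a := by
      rw [mul_comm, Complex.mul_conj, Complex.normSq_eq_norm_sq]
    push_cast at this ⊢
    rw [this]
    ring
  have hmaps : ∀ z ∈ uD, ψ z ∈ uD := by
    intro z hz
    have := mob_id ha (mem_uD.1 hz)
    have hz1 := mem_uD.1 hz
    have hz2 : 0 < 1 - ‖z‖ ^ 2 := by nlinarith [norm_nonneg z]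
    have h3 : 0 < ‖1 - (starRingEnd ℂ) a * z‖ := norm_pos_iff.2 (hne z hz)
    have h4 : 0 < 1 - ‖ψ z‖ ^ 2 := by rw [hψ, this]; positivity
    rw [mem_uD]
    nlinarith [norm_nonneg (ψ z)]
  have hinj : InjOn ψ uD := by
    intro z hz w hw h
    have hz' := hne z hz
    have hw' := hne w hw
    simp only [hψ] at h
    rw [div_eq_div_iff hz' hw'] at h
    have : ((1 - ‖a‖ ^ 2 : ℝ) : ℂ) * (w - z) = 0 := by
      have e : ((‖a‖ ^ 2 : ℝ) : ℂ) = (starRingEnd ℂ) a * a := by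
        rw [mul_comm, Complex.mul_conj, Complex.normSq_eq_norm_sq]
      push_cast at e ⊢
      rw [e]
      linear_combination h
    rcases mul_eq_zero.1 this with h' | h'
    · exact absurd (by exact_mod_cast h') ha2.ne'
    · exact (sub_eq_zero.1 h').symm
  have hcv := lintegral_image_eq_lintegral_abs_det_fderiv_mul volume isOpen_uD.measurableSet
    (f := ψ) (f' := fun z => (ContinuousLinearMap.toSpanSingleton ℂ
      (-((1 - ‖a‖ ^ 2 : ℝ) : ℂ) / (1 - (starRingEnd ℂ) a * z) ^ 2)).restrictScalars ℝ)
    (fun z hz => ((hd z hz).hasFDerivAt.restrictScalars ℝ).hasFDerivWithinAt) hinj W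
  have hpt : ∀ z ∈ uD, ENNReal.ofReal ((σ + 1) * (1 - ‖z‖ ^ 2) ^ σ) * ‖gk σ a z‖ₑ ^ 2 =
      ENNReal.ofReal |((ContinuousLinearMap.toSpanSingleton ℂ
      (-((1 - ‖a‖ ^ 2 : ℝ) : ℂ) / (1 - (starRingEnd ℂ) a * z) ^ 2)).restrictScalars ℝ).det| *
        W (ψ z) := by
    intro z hz
    have hz1 := mem_uD.1 hz
    have hz2 : 0 < 1 - ‖z‖ ^ 2 := by nlinarith [norm_nonneg z]
    have h3 : 0 < ‖1 - (starRingEnd ℂ) a * z‖ := norm_pos_iff.2 (hne z hz)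
    rw [det_mulC, ← ofReal_norm, ← ENNReal.ofReal_pow (norm_nonneg _), norm_gk_sq ha,
      ← ENNReal.ofReal_mul (mul_nonneg (by linarith) (by positivity)), hW, hψ]
    dsimp only
    rw [mob_id ha hz1, ← ENNReal.ofReal_mul (by positivity), abs_of_nonneg (by positivity),
      norm_div, norm_neg, norm_pow, Complex.norm_real, Real.norm_eq_abs, abs_of_pos ha2]
    congr 1
    rw [Real.div_rpow (by positivity) (by positivity), Real.mul_rpow ha2.le hz2.le,
      Real.rpow_neg (by positivity), Real.rpow_add ha2, Real.rpow_add (by positivity)]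
    norm_cast
    field_simp
  rw [lintegral_nuM]
  have e2 := lintegral_nuM σ (F := fun _ => 1)
  simp only [lintegral_one, mul_one] at e2
  rw [e2, nA, Measure.restrict_smul, lintegral_smul_measure, lintegral_smul_measure]
  gcongr 1
  rw [setLIntegral_congr_fun isOpen_uD.measurableSet hpt, ← hcv]
  exact lintegral_mono_set (image_subset_iff.2 hmaps)

/-- On the Whitney cell around `a` the kernel is as large as its normalization allows. -/
lemma gk_lower {σ : ℝ} (hσ : -1 < σ) {a w : ℂ} {h : ℝ} (hh : 0 < h) (ha : h / 2 < 1 - ‖a‖)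
    (ha' : 1 - ‖a‖ ≤ h) (hw1 : ‖w‖ < 1) (hw : ‖w - a‖ ≤ h / 32) :
    (1 / 18 : ℝ) ^ (2 + σ) * h ^ (-(2 + σ)) ≤ ‖gk σ a w‖ ^ 2 := by
  have ha1 : ‖a‖ < 1 := by linarith
  have hn := norm_nonneg a
  rw [norm_gk_sq ha1]
  have h1 : h / 2 ≤ 1 - ‖a‖ ^ 2 := by nlinarith
  have h2 : ‖1 - (starRingEnd ℂ) a * w‖ ≤ 3 * h := by
    have e : 1 - (starRingEnd ℂ) a * w = ((1 - ‖a‖ ^ 2 : ℝ) : ℂ) - (starRingEnd ℂ) a * (w - a) := by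
      have e : ((‖a‖ ^ 2 : ℝ) : ℂ) = (starRingEnd ℂ) a * a := by
        rw [mul_comm, Complex.mul_conj, Complex.normSq_eq_norm_sq]
      push_cast at e ⊢
      rw [e]; ring
    rw [e]
    refine (norm_sub_le _ _).trans ?_
    rw [norm_mul, RCLike.norm_conj, Complex.norm_real, Real.norm_eq_abs, abs_of_nonneg (by nlinarith)]
    nlinarith [norm_nonneg (w - a)]
  have h3 : 0 < ‖1 - (starRingEnd ℂ) a * w‖ := norm_pos_iff.2 fun h => by
    have := mob_aux ha1 hw1
    rw [h] at this
    simp at this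
  calc (1 / 18 : ℝ) ^ (2 + σ) * h ^ (-(2 + σ)) = (h / 2) ^ (2 + σ) * ((3 * h) ^ 2) ^ (-(2 + σ)) := by
        rw [Real.rpow_neg hh.le, Real.rpow_neg (by positivity), ← div_eq_mul_inv, ← div_eq_mul_inv,
          ← Real.div_rpow (by positivity) hh.le, ← Real.div_rpow (by positivity) (by positivity)]
        congr 1
        field_simp
        norm_num
    _ ≤ _ := by
      refine mul_le_mul (Real.rpow_le_rpow (by positivity) h1 (by linarith)) ?_ (by positivity)
        (Real.rpow_nonneg (by linarith) _)
      exact Real.rpow_le_rpow_of_nonpos (by positivity) (by gcongr) (by linarith)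

lemma exists_primitive {g : ℂ → ℂ} (hg : DifferentiableOn ℂ g uD) :
    ∃ f : ℂ → ℂ, DifferentiableOn ℂ f uD ∧ f 0 = 0 ∧ ∀ z ∈ uD, deriv f z = g z := by
  obtain ⟨f, hf, hd⟩ := (DifferentiableOn.isExactOn_ball hg).with_val_at 0 0
  exact ⟨f, fun z hz => (hd z hz).differentiableAt.differentiableWithinAt, hf,
    fun z hz => (hd z hz).deriv⟩

/-! ### The space `𝒟_{σ,*}` as a Hilbert space -/

lemma deriv_diffOn {f : ℂ → ℂ} (hf : DifferentiableOn ℂ f uD) :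
    DifferentiableOn ℂ (deriv f) uD := hf.deriv isOpen_uD

lemma deriv_add_uD {f g : ℂ → ℂ} (hf : DifferentiableOn ℂ f uD) (hg : DifferentiableOn ℂ g uD)
    {z : ℂ} (hz : z ∈ uD) : deriv (f + g) z = deriv f z + deriv g z :=
  deriv_add (hf.differentiableAt (isOpen_uD.mem_nhds hz))
    (hg.differentiableAt (isOpen_uD.mem_nhds hz))

lemma deriv_smul_uD {f : ℂ → ℂ} (hf : DifferentiableOn ℂ f uD) (c : ℂ)
    {z : ℂ} (hz : z ∈ uD) : deriv (c • f) z = c * deriv f z := by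
  rw [deriv_const_smul c (hf.differentiableAt (isOpen_uD.mem_nhds hz)), smul_eq_mul]

lemma eLpNorm_two_sq {μ : Measure ℂ} (g : ℂ → ℂ) : eLpNorm g 2 μ ^ 2 = ∫⁻ z, ‖g z‖ₑ ^ 2 ∂μ := by
  have := eLpNorm_nnreal_pow_eq_lintegral (μ := μ) (f := g) (p := 2) (by norm_num)
  simp only [ENNReal.coe_ofNat, NNReal.coe_ofNat, ENNReal.rpow_two] at this
  exact this

lemma memLp_deriv {σ : ℝ} {f : ℂ → ℂ} (hf : ∫⁻ z, ‖deriv f z‖ₑ ^ 2 ∂(nuM σ) < ⊤) :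
    MemLp (deriv f) 2 (nuM σ) := by
  refine ⟨(measurable_deriv f).aestronglyMeasurable, ?_⟩
  rw [← eLpNorm_two_sq] at hf
  exact lt_top_iff_ne_top.2 fun h => by simp [h] at hf

lemma memLp_deriv_iff {σ : ℝ} {f : ℂ → ℂ} :
    MemLp (deriv f) 2 (nuM σ) ↔ ∫⁻ z, ‖deriv f z‖ₑ ^ 2 ∂(nuM σ) < ⊤ := by
  refine ⟨fun h => ?_, memLp_deriv⟩
  rw [← eLpNorm_two_sq]
  exact ENNReal.pow_lt_top h.2

lemma memDWStar_iff {σ : ℝ} (hσ : -1 < σ) {f : ℂ → ℂ} : MemDWStar σ f ↔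
    DifferentiableOn ℂ f uD ∧ f 0 = 0 ∧ MemLp (deriv f) 2 (nuM σ) := by
  rw [memLp_deriv_iff]
  constructor
  · rintro ⟨⟨h1, h2⟩, h3⟩
    exact ⟨h1, h3, by rwa [← eDNormSqW_eq' hσ h3]⟩
  · rintro ⟨h1, h3, h2⟩
    exact ⟨⟨h1, by rwa [eDNormSqW_eq' hσ h3]⟩, h3⟩

lemma ae_deriv_add {σ : ℝ} {f g : ℂ → ℂ} (hf : DifferentiableOn ℂ f uD)
    (hg : DifferentiableOn ℂ g uD) : deriv (f + g) =ᵐ[nuM σ] deriv f + deriv g := by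
  filter_upwards [ae_nuM_mem σ] with z hz
  exact deriv_add_uD hf hg hz

lemma ae_deriv_smul {σ : ℝ} {f : ℂ → ℂ} (hf : DifferentiableOn ℂ f uD) (c : ℂ) :
    deriv (c • f) =ᵐ[nuM σ] c • deriv f := by
  filter_upwards [ae_nuM_mem σ] with z hz
  exact deriv_smul_uD hf c hz

/-- The space `𝒟_{σ,*}` as a subspace of `ℂ → ℂ`. -/
def VS (σ : ℝ) : Submodule ℂ (ℂ → ℂ) where
  carrier := {f | DifferentiableOn ℂ f uD ∧ f 0 = 0 ∧ MemLp (deriv f) 2 (nuM σ)}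
  zero_mem' := by
    refine ⟨differentiableOn_const 0, rfl, ?_⟩
    have : deriv (0 : ℂ → ℂ) = 0 := by ext; simp
    rw [this]
    exact MemLp.zero
  add_mem' := by
    rintro f g ⟨h1, h2, h3⟩ ⟨k1, k2, k3⟩
    exact ⟨h1.add k1, by simp [h2, k2], (memLp_congr_ae (ae_deriv_add h1 k1)).2 (h3.add k3)⟩
  smul_mem' := by
    rintro c f ⟨h1, h2, h3⟩
    exact ⟨h1.const_smul c, by simp [h2],
      (memLp_congr_ae (ae_deriv_smul h1 c)).2 (h3.const_smul c)⟩

lemma mem_VS {σ : ℝ} (hσ : -1 < σ) {f : ℂ → ℂ} : f ∈ VS σ ↔ MemDWStar σ f :=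
  (memDWStar_iff hσ).symm

/-- The isometric embedding `f ↦ f'` of `𝒟_{σ,*}` into `L²`. -/
def Lam (σ : ℝ) : VS σ →ₗ[ℂ] Lp ℂ 2 (nuM σ) where
  toFun f := f.2.2.2.toLp (deriv f.1)
  map_add' f g := by
    rw [← MemLp.toLp_add, MemLp.toLp_eq_toLp_iff]
    exact ae_deriv_add f.2.1 g.2.1
  map_smul' c f := by
    rw [RingHom.id_apply, ← MemLp.toLp_const_smul, MemLp.toLp_eq_toLp_iff]
    exact ae_deriv_smul f.2.1 c

lemma Lam_coe {σ : ℝ} (f : VS σ) : (Lam σ f : ℂ → ℂ) =ᵐ[nuM σ] deriv f.1 :=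
  f.2.2.2.coeFn_toLp

lemma enorm_Lam_sq {σ : ℝ} (f : VS σ) :
    ‖Lam σ f‖ₑ ^ 2 = ∫⁻ z, ‖deriv f.1 z‖ₑ ^ 2 ∂(nuM σ) := by
  rw [← eLpNorm_two_sq, Lam]
  simp only [LinearMap.coe_mk, AddHom.coe_mk, Lp.enorm_toLp]

lemma NSq_eq_Lam {σ : ℝ} (hσ : -1 < σ) (f : VS σ) : eDNormSqW σ f.1 = ‖Lam σ f‖ₑ ^ 2 := by
  rw [enorm_Lam_sq, eDNormSqW_eq' hσ f.2.2.1]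

/-- Locally uniform control of holomorphic functions by their weighted `L²` norm. -/
lemma loc_bound {σ : ℝ} (hσ : -1 < σ) {a : ℂ} (ha : a ∈ uD) :
    ∃ C r : ℝ, 0 < C ∧ 0 < r ∧ ∀ f : VS σ, ∀ z, ‖z - a‖ ≤ r →
      ‖deriv f.1 z‖ ≤ C * ‖Lam σ f‖ := by
  obtain ⟨h1, h2⟩ := lev_spec ha
  set h := (1 / 2 : ℝ) ^ lev a
  have hh : 0 < h := by positivity
  have hp := ptC_pos hσ
  refine ⟨Real.sqrt (ptC σ * h ^ (-(2 + σ))), h / 8, by positivity, by positivity, ?_⟩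
  intro f z hz
  have key := (norm_sq_le_sphere hσ hh h1 h2 (deriv_diffOn f.2.1) hz).trans
    (mul_le_mul_right (setLIntegral_le_lintegral _ _) _)
  rw [← enorm_Lam_sq, ← ofReal_norm, ← ofReal_norm, ← ENNReal.ofReal_pow (norm_nonneg _),
    ← ENNReal.ofReal_pow (norm_nonneg _), ← ENNReal.ofReal_mul (by positivity),
    ENNReal.ofReal_le_ofReal_iff (by positivity)] at key
  refine le_of_sq_le_sq ?_ (by positivity)
  rw [mul_pow, Real.sq_sqrt (by positivity)]
  exact key

/-- Completeness of the weighted Bergman space. -/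
lemma isClosed_range_Lam {σ : ℝ} (hσ : -1 < σ) :
    IsClosed (LinearMap.range (Lam σ) : Set (Lp ℂ 2 (nuM σ))) := by
  refine IsSeqClosed.isClosed ?_
  intro u u0 hu hlim
  choose f hf using hu
  have hcau : CauchySeq u := hlim.cauchySeq
  have hdiff : ∀ n m z, z ∈ uD → deriv (f n - f m).1 z = deriv (f n).1 z - deriv (f m).1 z := by
    intro n m z hz
    exact deriv_sub ((f n).2.1.differentiableAt (isOpen_uD.mem_nhds hz))
      ((f m).2.1.differentiableAt (isOpen_uD.mem_nhds hz))
  -- the derivatives are locally uniformly Cauchy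
  have hloc : ∀ a ∈ uD, ∃ r > 0, UniformCauchySeqOn (fun n z => deriv (f n).1 z) atTop
      (ball a r ∩ uD) := by
    intro a ha
    obtain ⟨C, r, hC, hr, hb⟩ := loc_bound hσ ha
    refine ⟨r, hr, ?_⟩
    rw [Metric.uniformCauchySeqOn_iff]
    intro ε hε
    obtain ⟨N, hN⟩ := Metric.cauchySeq_iff.1 hcau (ε / C) (by positivity)
    refine ⟨N, fun m hm n hn z hz => ?_⟩
    have := hb (f m - f n) z (by
      have := hz.1
      rw [mem_ball, dist_eq_norm] at this
      exact this.le)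
    rw [hdiff _ _ _ hz.2, map_sub, hf, hf] at this
    rw [dist_eq_norm]
    refine this.trans_lt ?_
    have := hN m hm n hn
    rw [dist_eq_norm, lt_div_iff₀ hC] at this
    linarith
  have hptc : ∀ z ∈ uD, ∃ l, Tendsto (fun n => deriv (f n).1 z) atTop (𝓝 l) := by
    intro z hz
    obtain ⟨r, hr, hU⟩ := hloc z hz
    exact cauchySeq_tendsto_of_complete (hU.cauchySeq ⟨mem_ball_self hr, hz⟩)
  choose! g hg using hptc
  have hTL : TendstoLocallyUniformlyOn (fun n z => deriv (f n).1 z) g atTop uD := by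
    intro v hv a ha
    obtain ⟨r, hr, hU⟩ := hloc a ha
    have := hU.tendstoUniformlyOn_of_tendsto (fun z hz => hg z hz.2)
    refine ⟨ball a r ∩ uD, ?_, this v hv⟩
    exact inter_mem (mem_nhdsWithin_of_mem_nhds (ball_mem_nhds a hr)) self_mem_nhdsWithin
  have hgd : DifferentiableOn ℂ g uD :=
    hTL.differentiableOn (Eventually.of_forall fun n => deriv_diffOn (f n).2.1) isOpen_uD
  obtain ⟨F, hF1, hF2, hF3⟩ := exists_primitive hgd
  -- a subsequence converges a.e. to `u0`
  obtain ⟨ns, hns, hae⟩ := (tendstoInMeasure_of_tendsto_Lp hlim).exists_seq_tendsto_ae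
  have hall : ∀ᵐ z ∂(nuM σ), ∀ n, u n z = deriv (f n).1 z := by
    rw [ae_all_iff]
    intro n
    rw [← hf n]
    exact Lam_coe (f n)
  have heq : deriv F =ᵐ[nuM σ] u0 := by
    filter_upwards [hae, hall, ae_nuM_mem σ] with z h1 h2 h3
    rw [hF3 z h3]
    refine tendsto_nhds_unique ((hg z h3).comp hns.tendsto_atTop) ?_
    refine h1.congr fun n => ?_
    exact h2 _
  have hFV : F ∈ VS σ := ⟨hF1, hF2, (memLp_congr_ae heq).2 (Lp.memLp u0)⟩
  refine ⟨⟨F, hFV⟩, ?_⟩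
  refine Lp.ext ((Lam_coe _).trans heq)

/-! ### Approximation by finite rank operators on `𝒟_{β,*}` -/

/-- Finitely many bounded functionals can be annihilated by subtracting an operator of finite
rank, without increasing the norm: `f - P f` is the orthogonal projection of `f` onto the common
kernel. -/
lemma exists_kill {V E : Type} [AddCommGroup V] [Module ℂ V] [NormedAddCommGroup E]
    [InnerProductSpace ℂ E] [CompleteSpace E] (L : V →ₗ[ℂ] E)
    (hL : IsClosed (LinearMap.range L : Set E)) {ι : Type} [Fintype ι] (J : V →ₗ[ℂ] (ι → ℂ))
    {C : ℝ} (hJ : ∀ f, ‖J f‖ ≤ C * ‖L f‖) :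
    ∃ P : V →ₗ[ℂ] V, Module.rank ℂ (LinearMap.range P) ≤ Fintype.card ι ∧
      ∀ f, J (f - P f) = 0 ∧ ‖L (f - P f)‖ ≤ ‖L f‖ := by
  set W : Submodule ℂ E := (LinearMap.ker J).map L with hW
  have hJ0 : ∀ f g, L f = L g → J f = J g := by
    intro f g h
    have := hJ (f - g)
    rw [map_sub L, h, sub_self, norm_zero, mul_zero, map_sub] at this
    exact sub_eq_zero.1 (norm_le_zero_iff.1 this)
  have hWc : IsClosed (W : Set E) := by
    refine IsSeqClosed.isClosed ?_
    intro x x0 hx hlim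
    choose f hf hfx using hx
    obtain ⟨g, hg⟩ : x0 ∈ LinearMap.range L :=
      hL.mem_of_tendsto hlim (Eventually.of_forall fun n => ⟨f n, hfx n⟩)
    refine ⟨g, ?_, hg⟩
    have h1 : ∀ n, ‖J g‖ ≤ C * ‖x n - x0‖ := by
      intro n
      have := hJ (f n - g)
      have e : J (f n) = 0 := hf n
      rwa [map_sub, map_sub, e, zero_sub, norm_neg, hfx, hg] at this
    have h2 : Tendsto (fun n => C * ‖x n - x0‖) atTop (𝓝 (C * 0)) :=
      (tendsto_iff_norm_sub_tendsto_zero.1 hlim).const_mul C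
    rw [mul_zero] at h2
    exact norm_le_zero_iff.1 (ge_of_tendsto' h2 h1)
  have : CompleteSpace W := hWc.completeSpace_coe
  obtain ⟨s, hs⟩ := L.rangeRestrict.exists_rightInverse_of_surjective L.range_rangeRestrict
  have hs' : ∀ y, L (s y) = y := fun y => congrArg Subtype.val (LinearMap.congr_fun hs y)
  have hmem : ∀ f, L f - W.starProjection (L f) ∈ LinearMap.range L := by
    intro f
    refine Submodule.sub_mem _ ⟨f, rfl⟩ ?_
    have : W ≤ LinearMap.range L := LinearMap.map_le_range
    exact this (Submodule.starProjection_apply_mem _ _)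
  let Q : V →ₗ[ℂ] LinearMap.range L :=
    LinearMap.codRestrict _ (L - (W.starProjection : E →ₗ[ℂ] E) ∘ₗ L) hmem
  have hQ : ∀ f, L (s (Q f)) = L f - W.starProjection (L f) := fun f => hs' _
  refine ⟨s ∘ₗ Q, ?_, ?_⟩
  -- `J` is injective on the range.
  · have hinj : Function.Injective (J ∘ₗ (LinearMap.range (s ∘ₗ Q)).subtype) := by
      rw [← LinearMap.ker_eq_bot, LinearMap.ker_eq_bot']
      rintro ⟨_, f, rfl⟩ h
      have h1 : J (s (Q f)) = 0 := h
      have h2 : L (s (Q f)) ∈ W := ⟨_, h1, rfl⟩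
      have h3 : L (s (Q f)) ∈ Wᗮ := by
        rw [hQ]
        exact Submodule.sub_starProjection_mem_orthogonal _
      have h4 : L (s (Q f)) = 0 := by
        have := (Submodule.mem_orthogonal _ _).1 h3 _ h2
        exact inner_self_eq_zero.1 this
      have h5 : Q f = 0 := Subtype.ext ((hs' _).symm.trans h4)
      ext
      simp [h5]
    refine (LinearMap.rank_le_of_injective _ hinj).trans ?_
    simp
  · intro f
    have e : L (f - (s ∘ₗ Q) f) = W.starProjection (L f) := by
      rw [map_sub, LinearMap.comp_apply, hQ, sub_sub_cancel]
    constructor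
    · obtain ⟨g, hg, hgf⟩ : W.starProjection (L f) ∈ W := Submodule.starProjection_apply_mem _ _
      rw [hJ0 _ g (e.trans hgf.symm)]
      exact hg
    · rw [e]
      exact Submodule.norm_starProjection_apply_le _ _

/-- The `φ`-mass of a cell, i.e. the `|φ'|² dν_σ`-measure of its preimage. -/
def mass (σ : ℝ) (φ : ℂ → ℂ) (i : WI) : ℝ≥0∞ := ∫⁻ z in pre φ i, ‖deriv φ z‖ₑ ^ 2 ∂(nuM σ)

/-- The normalized mass `m_i / h_i^{2+σ}` of a cell. -/
def dens (σ : ℝ) (φ : ℂ → ℂ) (i : WI) : ℝ := (mass σ φ i).toReal * hh i ^ (-(2 + σ))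

lemma dens_nonneg (σ : ℝ) (φ : ℂ → ℂ) (i : WI) : 0 ≤ dens σ φ i :=
  mul_nonneg ENNReal.toReal_nonneg (Real.rpow_nonneg (hh_pos i).le _)

/-- The constant comparing the masses of a cell for the weights `α ≤ β`. -/
def wC (α β : ℝ) : ℝ := (β + 1) / (α + 1) * 2 ^ (β - α)

lemma wC_pos {α β : ℝ} (hα : -1 < α) (hαβ : α ≤ β) : 0 < wC α β := by
  have : 0 < α + 1 := by linarith
  have : 0 < β + 1 := by linarith
  unfold wC
  positivity

lemma schwarz {φ : ℂ → ℂ} (hφ : IsSchur φ) (h0 : φ 0 = 0) {z : ℂ} (hz : z ∈ uD) :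
    ‖φ z‖ ≤ ‖z‖ :=
  Complex.norm_le_norm_of_mapsTo_ball hφ.1 (hφ.2.mono_right ball_subset_closedBall) h0 (mem_uD.1 hz)

/-- Passing from the weight `α` to `β ≥ α` gains `h^{β-α}` on the cell, by the Schwarz lemma. -/
lemma mass_le {α β : ℝ} (hα : -1 < α) (hαβ : α ≤ β) {φ : ℂ → ℂ} (hφ : IsSchur φ) (h0 : φ 0 = 0)
    (i : WI) : mass β φ i ≤ ENNReal.ofReal (wC α β * hh i ^ (β - α)) * mass α φ i := by
  have e1 : ∀ σ, mass σ φ i = ∫⁻ z in pre φ i,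
      ENNReal.ofReal ((σ + 1) * (1 - ‖z‖ ^ 2) ^ σ) * ‖deriv φ z‖ₑ ^ 2 ∂nA := by
    intro σ
    have hsub : pre φ i ⊆ uD := fun z hz => hz.1
    rw [mass, nuM, restrict_withDensity (measurableSet_pre hφ i),
      Measure.restrict_restrict (measurableSet_pre hφ i), inter_eq_left.2 hsub,
      lintegral_withDensity_eq_lintegral_mul_non_measurable _ (measurable_dens σ)]
    · rfl
    · simp
  rw [e1, e1, ← lintegral_const_mul' _ _ ENNReal.ofReal_ne_top]
  refine setLIntegral_mono' (measurableSet_pre hφ i) fun z hz => ?_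
  rw [← mul_assoc]
  gcongr
  have hw := wC_pos hα hαβ
  have hhi := hh_pos i
  rw [← ENNReal.ofReal_mul (by positivity)]
  refine ENNReal.ofReal_le_ofReal ?_
  have hz1 := mem_uD.1 hz.1
  have hz2 : 0 < 1 - ‖z‖ ^ 2 := by nlinarith [norm_nonneg z]
  have h1 := cell_hi (hφ.2 hz.1) hz.2
  have h2 := schwarz hφ h0 hz.1
  have h3 : 1 - ‖z‖ ^ 2 ≤ 2 * hh i := by
    nlinarith [norm_nonneg z, norm_nonneg (φ z)]
  have hα1 : 0 < α + 1 := by linarith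
  have hβ1 : 0 < β + 1 := by linarith
  calc (β + 1) * (1 - ‖z‖ ^ 2) ^ β
      = (β + 1) * ((1 - ‖z‖ ^ 2) ^ (β - α) * (1 - ‖z‖ ^ 2) ^ α) := by
        rw [← Real.rpow_add hz2, sub_add_cancel]
    _ ≤ (β + 1) * ((2 * hh i) ^ (β - α) * (1 - ‖z‖ ^ 2) ^ α) := by
        gcongr
    _ = wC α β * hh i ^ (β - α) * ((α + 1) * (1 - ‖z‖ ^ 2) ^ α) := by
        rw [Real.mul_rpow (by norm_num) hhi.le]
        unfold wC
        field_simp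

/-- The key upper estimate: if the Taylor coefficients of `F'` of order `m` at the centre of the
cell `i` vanish whenever `t < d_i 4⁻ᵐ`, then `‖F ∘ φ‖² ≲ t ‖F‖²` in `𝒟_β`. -/
lemma upper_est {α β : ℝ} (hα : -1 < α) (hαβ : α ≤ β) {φ : ℂ → ℂ} (hφ : IsSchur φ) (h0 : φ 0 = 0)
    (hm : ∀ i, mass α φ i ≠ ⊤) (F : VS β) {t : ℝ} (ht : 0 ≤ t)
    (hF : ∀ i m, t < dens α φ i * (1 / 4) ^ m → tcoef (cen i) (hh i / 8) m (deriv F.1) = 0) :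
    eDNormSqW β (compOp φ F.1) ≤
      ENNReal.ofReal (3675 * 4 * ptC β * wC α β * t) * ‖Lam β F‖ₑ ^ 2 := by
  have hβ : -1 < β := by linarith
  have hpt := ptC_pos hβ
  have hw := wC_pos hα hαβ
  rw [eDNormSqW_comp hβ hφ h0 F.2.1 F.2.2.1, lintegral_pre hφ β]
  have hfin : ∫⁻ z, ‖deriv F.1 z‖ₑ ^ 2 ∂(nuM β) ≠ ⊤ := (memLp_deriv_iff.1 F.2.2.2).ne
  have hcell : ∀ i, ∫⁻ z in pre φ i, ‖deriv F.1 (φ z)‖ₑ ^ 2 * ‖deriv φ z‖ₑ ^ 2 ∂(nuM β) ≤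
      ENNReal.ofReal (4 * ptC β * wC α β * t) *
        ∫⁻ z in ball (cen i) (hh i / 4), ‖deriv F.1 z‖ₑ ^ 2 ∂(nuM β) := by
    intro i
    have hhi := hh_pos i
    have hfi : ∫⁻ z in ball (cen i) (hh i / 4), ‖deriv F.1 z‖ₑ ^ 2 ∂(nuM β) ≠ ⊤ :=
      ne_top_of_le_ne_top hfin (setLIntegral_le_lintegral _ _)
    set I := ∫⁻ z in ball (cen i) (hh i / 4), ‖deriv F.1 z‖ₑ ^ 2 ∂(nuM β)
    rcases (dens_nonneg α φ i).eq_or_lt with hd | hd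
    -- A cell without mass contributes nothing; otherwise divide by its density.
    · have hm0 : mass α φ i = 0 := by
        have : (mass α φ i).toReal = 0 := by
          rcases mul_eq_zero.1 hd.symm with h | h
          · exact h
          · exact absurd h (Real.rpow_pos_of_pos hhi _).ne'
        exact ((ENNReal.toReal_eq_zero_iff _).1 this).resolve_right (hm i)
      have hb0 : mass β φ i = 0 := by
        have := mass_le hα hαβ hφ h0 i
        rw [hm0, mul_zero] at this
        exact le_antisymm this bot_le
      have : ∫⁻ z in pre φ i, ‖deriv F.1 (φ z)‖ₑ ^ 2 * ‖deriv φ z‖ₑ ^ 2 ∂(nuM β) = 0 := by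
        rw [mass, lintegral_eq_zero_iff ((measurable_deriv φ).enorm.pow_const 2)] at hb0
        refine (lintegral_congr_ae ?_).trans lintegral_zero
        filter_upwards [hb0] with z hz
        simp only [Pi.zero_apply] at hz
        rw [hz, mul_zero]
      rw [this]
      exact bot_le
    · have hτ : 0 ≤ t / dens α φ i := by positivity
      have hloc : ∀ z ∈ pre φ i, ‖deriv F.1 (φ z)‖ₑ ^ 2 ≤ ENNReal.ofReal (4 * (t / dens α φ i)) *
          (ENNReal.ofReal (ptC β * hh i ^ (-(2 + β))) * I) := by
        intro z hz
        refine local_est hβ hhi (cen_lo i) (cen_hi i) (deriv_diffOn F.2.1) hfi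
          (cell_dist hz.2) hτ fun m hm => hF i m ?_
        rwa [div_lt_iff₀ hd, mul_comm] at hm
      calc ∫⁻ z in pre φ i, ‖deriv F.1 (φ z)‖ₑ ^ 2 * ‖deriv φ z‖ₑ ^ 2 ∂(nuM β)
          ≤ ∫⁻ z in pre φ i, (ENNReal.ofReal (4 * (t / dens α φ i)) *
          (ENNReal.ofReal (ptC β * hh i ^ (-(2 + β))) * I)) * ‖deriv φ z‖ₑ ^ 2 ∂(nuM β) := by
            refine setLIntegral_mono' (measurableSet_pre hφ i) fun z hz => ?_
            gcongr
            exact hloc z hz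
        _ = (ENNReal.ofReal (4 * (t / dens α φ i)) *
          (ENNReal.ofReal (ptC β * hh i ^ (-(2 + β))) * I)) * mass β φ i := by
            rw [mass, lintegral_const_mul']
            exact ENNReal.mul_ne_top ENNReal.ofReal_ne_top
              (ENNReal.mul_ne_top ENNReal.ofReal_ne_top hfi)
        _ ≤ (ENNReal.ofReal (4 * (t / dens α φ i)) *
          (ENNReal.ofReal (ptC β * hh i ^ (-(2 + β))) * I)) *
            (ENNReal.ofReal (wC α β * hh i ^ (β - α)) * mass α φ i) := by
            gcongr
            exact mass_le hα hαβ hφ h0 i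
        _ = ENNReal.ofReal (4 * (t / dens α φ i)) * ENNReal.ofReal (ptC β * hh i ^ (-(2 + β))) *
            ENNReal.ofReal (wC α β * hh i ^ (β - α)) * ENNReal.ofReal (mass α φ i).toReal * I := by
            rw [ENNReal.ofReal_toReal (hm i)]
            ring
        _ = ENNReal.ofReal (4 * ptC β * wC α β * t) * I := by
            rw [← ENNReal.ofReal_mul (by positivity), ← ENNReal.ofReal_mul (by positivity),
              ← ENNReal.ofReal_mul (by positivity)]
            congr 2
            have e : hh i ^ (-(2 + β)) * hh i ^ (β - α) = hh i ^ (-(2 + α)) := by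
              rw [← Real.rpow_add hhi]
              congr 1
              ring
            calc _ = 4 * ptC β * wC α β * t * (((mass α φ i).toReal *
                  (hh i ^ (-(2 + β)) * hh i ^ (β - α))) / dens α φ i) := by ring
              _ = _ := by
                rw [e, ← dens, div_self hd.ne', mul_one]
  calc _ ≤ ∑' i, ENNReal.ofReal (4 * ptC β * wC α β * t) *
        ∫⁻ z in ball (cen i) (hh i / 4), ‖deriv F.1 z‖ₑ ^ 2 ∂(nuM β) := ENNReal.tsum_le_tsum hcell
    _ ≤ ENNReal.ofReal (4 * ptC β * wC α β * t) *
        (3675 * ∫⁻ z, ‖deriv F.1 z‖ₑ ^ 2 ∂(nuM β)) := by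
        rw [ENNReal.tsum_mul_left]
        gcongr
        exact overlap _ ((measurable_deriv F.1).enorm.pow_const 2)
    _ = _ := by
        rw [← enorm_Lam_sq, ← mul_assoc]
        congr 1
        rw [mul_comm, show (3675 : ℝ≥0∞) = ENNReal.ofReal 3675 by simp,
          ← ENNReal.ofReal_mul (by norm_num)]
        congr 1
        ring

lemma tcoef_integrable {a : ℂ} {r : ℝ} (hr : 0 < r) (m : ℕ) {g : ℂ → ℂ}
    (hg : ContinuousOn g (sphere a r)) :
    CircleIntegrable (fun z => (z - a)⁻¹ ^ m * (z - a)⁻¹ * g z) a r := by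
  refine ContinuousOn.circleIntegrable hr.le ?_
  have h1 : ContinuousOn (fun z : ℂ => (z - a)⁻¹) (sphere a r) := by
    refine ContinuousOn.inv₀ (by fun_prop) fun z hz h => ?_
    rw [sub_eq_zero] at h
    rw [h, mem_sphere, dist_self] at hz
    exact hr.ne hz
  exact ((h1.pow m).mul h1).mul hg

lemma tcoef_congr {a : ℂ} {r : ℝ} (hr : 0 < r) (m : ℕ) {g k : ℂ → ℂ}
    (h : ∀ z ∈ sphere a r, g z = k z) : tcoef a r m g = tcoef a r m k := by
  unfold tcoef
  congr 1
  refine circleIntegral.integral_congr hr.le fun z hz => ?_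
  rw [h z hz]

lemma tcoef_add {a : ℂ} {r : ℝ} (hr : 0 < r) (m : ℕ) {g k : ℂ → ℂ}
    (hg : ContinuousOn g (sphere a r)) (hk : ContinuousOn k (sphere a r)) :
    tcoef a r m (fun z => g z + k z) = tcoef a r m g + tcoef a r m k := by
  unfold tcoef
  rw [← mul_add, ← circleIntegral.integral_add (tcoef_integrable hr m hg) (tcoef_integrable hr m hk)]
  simp only [mul_add]

lemma tcoef_smul {a : ℂ} {r : ℝ} (m : ℕ) {g : ℂ → ℂ} (c : ℂ) :
    tcoef a r m (fun z => c * g z) = c * tcoef a r m g := by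
  unfold tcoef
  rw [mul_left_comm c]
  congr 1
  rw [← circleIntegral.integral_const_mul c]
  simp only [mul_left_comm c]

lemma sphere_sub_uD (i : WI) : sphere (cen i) (hh i / 8) ⊆ uD :=
  (sphere_subset_closedBall.trans (closedBall_subset_ball (by have := hh_pos i; linarith))).trans
    (ball_sub_uD (cen_lo i))

/-- The Taylor coefficient of `f'` at the centre of a cell, as a functional of `f`. -/
def jf (σ : ℝ) (x : WI × ℕ) : VS σ →ₗ[ℂ] ℂ where
  toFun f := tcoef (cen x.1) (hh x.1 / 8) x.2 (deriv f.1)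
  map_add' f g := by
    have hr : 0 < hh x.1 / 8 := by have := hh_pos x.1; positivity
    rw [← tcoef_add hr _ ((deriv_diffOn f.2.1).continuousOn.mono (sphere_sub_uD _))
      ((deriv_diffOn g.2.1).continuousOn.mono (sphere_sub_uD _))]
    exact tcoef_congr hr _ fun z hz => deriv_add_uD f.2.1 g.2.1 (sphere_sub_uD _ hz)
  map_smul' c f := by
    have hr : 0 < hh x.1 / 8 := by have := hh_pos x.1; positivity
    rw [RingHom.id_apply, smul_eq_mul, ← tcoef_smul]
    exact tcoef_congr hr _ fun z hz => deriv_smul_uD f.2.1 c (sphere_sub_uD _ hz)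

lemma jf_bound {σ : ℝ} (hσ : -1 < σ) (x : WI × ℕ) :
    ∃ C : ℝ, 0 ≤ C ∧ ∀ f, ‖jf σ x f‖ ≤ C * ‖Lam σ f‖ := by
  have hhi := hh_pos x.1
  have hr : 0 < hh x.1 / 8 := by positivity
  have hp := ptC_pos hσ
  refine ⟨Real.sqrt (ptC σ * hh x.1 ^ (-(2 + σ))) * (hh x.1 / 8)⁻¹ ^ x.2, by positivity, ?_⟩
  intro f
  have hA : ∀ z ∈ sphere (cen x.1) (hh x.1 / 8), ‖deriv f.1 z‖ ≤
      Real.sqrt (ptC σ * hh x.1 ^ (-(2 + σ))) * ‖Lam σ f‖ := by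
    intro z hz
    have hz' : ‖z - cen x.1‖ ≤ hh x.1 / 8 := by
      rw [mem_sphere, dist_eq_norm] at hz
      exact hz.le
    have key := (norm_sq_le_sphere hσ hhi (cen_lo x.1) (cen_hi x.1) (deriv_diffOn f.2.1) hz').trans
      (mul_le_mul_right (setLIntegral_le_lintegral _ _) _)
    rw [← enorm_Lam_sq, ← ofReal_norm, ← ofReal_norm, ← ENNReal.ofReal_pow (norm_nonneg _),
      ← ENNReal.ofReal_pow (norm_nonneg _), ← ENNReal.ofReal_mul (by positivity),
      ENNReal.ofReal_le_ofReal_iff (by positivity)] at key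
    refine le_of_sq_le_sq ?_ (by positivity)
    rw [mul_pow, Real.sq_sqrt (by positivity)]
    exact key
  refine (norm_tcoef_le hr x.2 hA).trans (le_of_eq ?_)
  ring

lemma eOpNorm_le_of_sq {Mem : (ℂ → ℂ) → Prop} {NSq : (ℂ → ℂ) → ℝ≥0∞} {T : (ℂ → ℂ) → ℂ → ℂ}
    {c : ℝ} (hc : 0 ≤ c) (h : ∀ f, Mem f → NSq (T f) ≤ ENNReal.ofReal c * NSq f) :
    eOpNorm Mem NSq T ≤ ENNReal.ofReal (Real.sqrt c) := by
  refine sInf_le fun f hf => ?_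
  rw [← ENNReal.ofReal_pow (Real.sqrt_nonneg _), Real.sq_sqrt hc]
  exact h f hf

/-- The constant in the upper estimate. -/
def upC (α β : ℝ) : ℝ := 3675 * 4 * ptC β * wC α β

lemma upC_pos {α β : ℝ} (hα : -1 < α) (hαβ : α ≤ β) : 0 < upC α β := by
  have := ptC_pos (lt_of_lt_of_le hα hαβ)
  have := wC_pos hα hαβ
  unfold upC
  positivity

/-- Upper estimate for the approximation numbers on `𝒟_{β,*}`: remove the Taylor coefficients
indexed by `T`, an operation of rank at most `T.card`, and apply `upper_est` to what is left. -/
lemma approx_upper {α β : ℝ} (hα : -1 < α) (hαβ : α ≤ β) {φ : ℂ → ℂ} (hφ : IsSchur φ)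
    (h0 : φ 0 = 0) (hm : ∀ i, mass α φ i ≠ ⊤) {t : ℝ} (ht : 0 ≤ t) (T : Finset (WI × ℕ))
    (hT : ∀ i m, t < dens α φ i * (1 / 4) ^ m → (i, m) ∈ T) :
    eApproxNum (MemDWStar β) (eDNormSqW β) (compOp φ) (T.card + 1) ≤
      ENNReal.ofReal (Real.sqrt (upC α β * t)) := by
  have hβ : -1 < β := by linarith
  let J : VS β →ₗ[ℂ] (T → ℂ) := LinearMap.pi fun x => jf β x.1
  choose Cx hCx hCx' using jf_bound hβ
  have hJ : ∀ f, ‖J f‖ ≤ (∑ x ∈ T, Cx x) * ‖Lam β f‖ := by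
    intro f
    have hs : 0 ≤ ∑ x ∈ T, Cx x := Finset.sum_nonneg fun x _ => hCx x
    refine (pi_norm_le_iff_of_nonneg (by positivity)).2 fun x => ?_
    refine (hCx' x.1 f).trans ?_
    gcongr
    exact Finset.single_le_sum (fun y _ => hCx y) x.2
  obtain ⟨P, hP1, hP2⟩ := exists_kill (Lam β) (isClosed_range_Lam hβ) J hJ
  obtain ⟨q, hq⟩ := (VS β).subtype.exists_leftInverse_of_injective (Submodule.ker_subtype _)
  have hq' : ∀ f : VS β, q f.1 = f := fun f => LinearMap.congr_fun hq f
  let R : (ℂ → ℂ) →ₗ[ℂ] (ℂ → ℂ) :=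
    ((LinearMap.funLeft ℂ ℂ φ) ∘ₗ (VS β).subtype) ∘ₗ (P ∘ₗ q)
  have hR : Module.rank ℂ (LinearMap.range R) < ((T.card + 1 : ℕ) : Cardinal) := by
    have h1 : Module.rank ℂ (LinearMap.range R) ≤ Module.rank ℂ (LinearMap.range P) :=
      (LinearMap.rank_comp_le_right (P ∘ₗ q) _).trans (LinearMap.rank_comp_le_left q P)
    refine (h1.trans hP1).trans_lt ?_
    rw [Fintype.card_coe]
    exact_mod_cast Nat.lt_succ_self _
  refine le_trans (sInf_le ⟨R, hR, rfl⟩) (eOpNorm_le_of_sq (by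
    have := upC_pos hα hαβ
    positivity) ?_)
  intro f hf
  set F : VS β := ⟨f, (mem_VS hβ).2 hf⟩ with hFdef
  have e1 : (fun z => compOp φ f z - R f z) = compOp φ (F - P F).1 := by
    ext z
    have : q f = F := hq' F
    simp only [R, LinearMap.comp_apply, this]
    rfl
  rw [e1]
  refine (upper_est hα hαβ hφ h0 hm (F - P F) ht fun i m him => ?_).trans ?_
  · have := congrFun (hP2 F).1 ⟨(i, m), hT i m him⟩
    exact this
  · rw [show f = F.1 from rfl, NSq_eq_Lam hβ, upC]
    gcongr
    rw [← ofReal_norm, ← ofReal_norm]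
    exact ENNReal.ofReal_le_ofReal (hP2 F).2

lemma bounded_upper {α β : ℝ} (hα : -1 < α) (hαβ : α ≤ β) {φ : ℂ → ℂ} (hφ : IsSchur φ)
    (h0 : φ 0 = 0) (hm : ∀ i, mass α φ i ≠ ⊤) {t : ℝ} (ht : 0 ≤ t)
    (hT : ∀ i, dens α φ i ≤ t) :
    IsBoundedOpOn (MemDWStar β) (eDNormSqW β) (compOp φ) := by
  have hβ : -1 < β := by linarith
  have key : ∀ f, MemDWStar β f → eDNormSqW β (compOp φ f) ≤
      ENNReal.ofReal (upC α β * t) * eDNormSqW β f := by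
    intro f hf
    set F : VS β := ⟨f, (mem_VS hβ).2 hf⟩
    rw [show f = F.1 from rfl, NSq_eq_Lam hβ, upC]
    refine upper_est hα hαβ hφ h0 hm F ht fun i m him => absurd him (not_lt.2 ?_)
    refine le_trans ?_ (hT i)
    exact mul_le_of_le_one_right (dens_nonneg _ _ _) (pow_le_one₀ (by norm_num) (by norm_num))
  refine ⟨fun f hf => ⟨⟨hf.1.1.comp hφ.1 hφ.2, ?_⟩, ?_⟩, ?_⟩
  · exact (key f hf).trans_lt (ENNReal.mul_lt_top ENNReal.ofReal_lt_top hf.1.2)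
  · simp [compOp, h0, hf.2]
  · refine ne_top_of_le_ne_top ENNReal.ofReal_ne_top (eOpNorm_le_of_sq ?_ key)
    have := upC_pos hα hαβ
    positivity

/-! ### Counting lemmas and summation -/

/-- If every finite set of indices contains one where `d` is at most `c` at the cardinality, then
the sum of `d` is at most the sum of `c`. -/
lemma tsum_le_of_min {ι : Type} (d : ι → ℝ≥0∞) (c : ℕ → ℝ≥0∞)
    (h : ∀ T : Finset ι, T.Nonempty → ∃ i ∈ T, d i ≤ c (T.card - 1)) :
    ∑' i, d i ≤ ∑' k, c k := by
  classical
  have key : ∀ N : ℕ, ∀ T : Finset ι, T.card = N → ∑ i ∈ T, d i ≤ ∑ k ∈ Finset.range N, c k := by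
    intro N
    induction N with
    | zero => intro T hT; simp [Finset.card_eq_zero.1 hT]
    | succ N ih =>
      intro T hT
      obtain ⟨i, hi, hd⟩ := h T (Finset.card_pos.1 (by omega))
      rw [← Finset.sum_erase_add T _ hi, Finset.sum_range_succ]
      rw [hT, Nat.add_sub_cancel] at hd
      exact add_le_add (ih _ (by rw [Finset.card_erase_of_mem hi, hT]; rfl)) hd
  rw [ENNReal.tsum_eq_iSup_sum]
  exact iSup_le fun T => (key _ T rfl).trans (ENNReal.sum_le_tsum _)

/-- A nonnegative summable family attains its maximum off any finite set. -/
lemma exists_max_compl {κ : Type} [Infinite κ] {x : κ → ℝ} (hx : Summable x) (h0 : ∀ j, 0 ≤ x j)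
    (T : Finset κ) : ∃ j ∉ T, ∀ k ∉ T, x k ≤ x j := by
  obtain ⟨j0, hj0⟩ := Infinite.exists_notMem_finset T
  by_cases hz : ∀ k ∉ T, x k ≤ 0
  · exact ⟨j0, hj0, fun k hk => (hz k hk).trans (h0 j0)⟩
  push Not at hz
  obtain ⟨k0, hk0, hpos⟩ := hz
  have hfin : {k | k ∉ T ∧ x k0 ≤ x k}.Finite := by
    have := hx.tendsto_cofinite_zero.eventually (gt_mem_nhds hpos)
    rw [Filter.eventually_cofinite] at this
    exact this.subset fun k hk => not_lt.2 hk.2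
  obtain ⟨j, hj, hmax⟩ := hfin.exists_maximalFor x _ ⟨k0, hk0, le_rfl⟩
  refine ⟨j, hj.1, fun k hk => ?_⟩
  by_contra hcon
  push Not at hcon
  have := hmax (j := k) ⟨hk, hj.2.trans hcon.le⟩ hcon.le
  exact absurd this (not_le.2 hcon)

/-- Decreasing rearrangement: if `y N ≤ C t` for every level `t` exceeded by `x` on at most `N`
indices, then the sum of `y` is at most `C` times the sum of `x`. -/
lemma tsum_le_of_rearr {κ : Type} [Infinite κ] {x : κ → ℝ} (hx : Summable x)
    (h0 : ∀ j, 0 ≤ x j) (y : ℕ → ℝ≥0∞) (C : ℝ≥0∞)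
    (h : ∀ (t : ℝ) (T : Finset κ), 0 ≤ t → (∀ j, t < x j → j ∈ T) →
      y T.card ≤ C * ENNReal.ofReal t) :
    ∑' n, y n ≤ C * ∑' j, ENNReal.ofReal (x j) := by
  classical
  have key : ∀ N : ℕ, ∃ T : Finset κ, T.card = N ∧
      ∑ n ∈ Finset.range N, y n ≤ C * ∑ j ∈ T, ENNReal.ofReal (x j) := by
    intro N
    induction N with
    | zero => exact ⟨∅, by simp⟩
    | succ N ih =>
      obtain ⟨T, hT, hs⟩ := ih
      obtain ⟨j, hj, hmax⟩ := exists_max_compl hx h0 T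
      refine ⟨insert j T, by rw [Finset.card_insert_of_notMem hj, hT], ?_⟩
      rw [Finset.sum_range_succ, Finset.sum_insert hj, mul_add, add_comm]
      refine add_le_add ?_ hs
      rw [← hT]
      refine h _ _ (h0 j) fun k hk => ?_
      by_contra hkT
      exact absurd (hmax k hkT) (not_le.2 hk)
  rw [ENNReal.tsum_eq_iSup_nat]
  refine iSup_le fun N => ?_
  obtain ⟨T, -, hs⟩ := key N
  refine hs.trans ?_
  gcongr
  exact ENNReal.sum_le_tsum _

lemma tsum_div (c : ℕ → ℝ≥0∞) (m : ℕ) [NeZero m] : ∑' k, c (k / m) = m * ∑' n, c n := by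
  rw [← (Nat.divModEquiv m).symm.tsum_eq, ENNReal.tsum_prod', ← ENNReal.tsum_mul_left]
  congr 1
  ext n
  rw [tsum_fintype]
  have : ∀ b : Fin m, (((Nat.divModEquiv m).symm (n, b) : ℕ)) / m = n := by
    intro b
    have := (Nat.divModEquiv m).apply_symm_apply (n, b)
    exact congrArg Prod.fst this
  simp only [this, Finset.sum_const, Finset.card_univ, Fintype.card_fin, nsmul_eq_mul]

lemma infinite_WI_prod : Infinite (WI × ℕ) := by
  have : Nonempty WI := ⟨⟨idx 0, mem_image_of_mem _ (mem_uD.2 (by simp))⟩⟩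
  infer_instance

/-- Summability of the densities to the power `p/2` gives membership in `S_p(𝒟_{β,*})`. -/
lemma schatten_of_sum {α β p : ℝ} (hα : -1 < α) (hαβ : α ≤ β) (hp : 0 < p) {φ : ℂ → ℂ}
    (hφ : IsSchur φ) (h0 : φ 0 = 0) (hm : ∀ i, mass α φ i ≠ ⊤)
    (hsum : Summable fun i => dens α φ i ^ (p / 2)) :
    MemSchattenOn (MemDWStar β) (eDNormSqW β) (compOp φ) p := by
  have hq : 0 < p / 2 := by positivity
  have hup := upC_pos hα hαβ
  have hd0 := dens_nonneg α φ
  have hdq : ∀ i, 0 ≤ dens α φ i ^ (p / 2) := fun i => Real.rpow_nonneg (hd0 i) _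
  constructor
  · have hS : 0 ≤ ∑' i, dens α φ i ^ (p / 2) := tsum_nonneg hdq
    refine bounded_upper hα hαβ hφ h0 hm (t := (∑' i, dens α φ i ^ (p / 2)) ^ (p / 2)⁻¹)
      (by positivity) fun i => ?_
    have h1 : dens α φ i ^ (p / 2) ≤ ∑' i, dens α φ i ^ (p / 2) :=
      hsum.le_tsum i fun j _ => hdq j
    rw [Real.le_rpow_inv_iff_of_pos (hd0 i) hS hq]
    exact h1
  · have := infinite_WI_prod
    set x : WI × ℕ → ℝ := fun j => dens α φ j.1 ^ (p / 2) * ((1 / 4 : ℝ) ^ (p / 2)) ^ j.2 with hxdef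
    have hg : Summable fun m : ℕ => ((1 / 4 : ℝ) ^ (p / 2)) ^ m :=
      summable_geometric_of_lt_one (by positivity)
        (Real.rpow_lt_one (by norm_num) (by norm_num) hq)
    have hx : Summable x := hsum.mul_of_nonneg hg hdq (fun m => by positivity)
    have hx0 : ∀ j, 0 ≤ x j := fun j => mul_nonneg (hdq j.1) (by positivity)
    have hx' : ∀ j, x j = (dens α φ j.1 * (1 / 4) ^ j.2) ^ (p / 2) := by
      intro j
      simp only [hxdef]
      rw [Real.mul_rpow (hd0 _) (by positivity),
        ← Real.rpow_natCast_mul (by norm_num : (0 : ℝ) ≤ 1 / 4),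
        ← Real.rpow_mul_natCast (by norm_num : (0 : ℝ) ≤ 1 / 4), mul_comm (p / 2)]
    refine ne_top_of_le_ne_top ?_ (tsum_le_of_rearr hx hx0
      (fun n => eApproxNum (MemDWStar β) (eDNormSqW β) (compOp φ) (n + 1) ^ p)
      (ENNReal.ofReal (upC α β ^ (p / 2))) ?_)
    · refine ENNReal.mul_ne_top ENNReal.ofReal_ne_top ?_
      rw [← ENNReal.ofReal_tsum_of_nonneg hx0 hx]
      exact ENNReal.ofReal_ne_top
    · intro t T ht hT
      have hs : t = (t ^ (p / 2)⁻¹) ^ (p / 2) := by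
        rw [← Real.rpow_mul ht, inv_mul_cancel₀ hq.ne', Real.rpow_one]
      set s := t ^ (p / 2)⁻¹ with hsdef
      have hs0 : 0 ≤ s := by positivity
      have key := approx_upper hα hαβ hφ h0 hm hs0 T fun i m him => hT _ (by
        rw [hx', hs]
        exact Real.rpow_lt_rpow hs0 him hq)
      refine (ENNReal.rpow_le_rpow key hp.le).trans ?_
      rw [ENNReal.ofReal_rpow_of_nonneg (by positivity) hp.le, ← ENNReal.ofReal_mul (by positivity)]
      refine le_of_eq ?_
      congr 1
      rw [hs, Real.sqrt_eq_rpow, ← Real.rpow_mul (by positivity), ← Real.mul_rpow hup.le hs0]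
      congr 1
      ring

/-- The lower estimate on the approximation numbers gives summability of the densities. -/
lemma sum_of_count {α p : ℝ} (hp : 0 < p) {φ : ℂ → ℂ} (b : ℕ → ℝ≥0∞)
    (hb : ∑' n, b n ^ p ≠ ⊤) (B : ℝ) (hB : 0 < B) (m : ℕ) (hm : 0 < m)
    (hcount : ∀ (n : ℕ) (t : ℝ), 0 < t → b n < ENNReal.ofReal t → ∀ S : Finset WI,
      (∀ i ∈ S, B * t ^ 2 ≤ dens α φ i) → S.card ≤ m * n) :
    Summable fun i => dens α φ i ^ (p / 2) := by
  have hq : 0 < p / 2 := by positivity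
  have hd0 := dens_nonneg α φ
  have : NeZero m := ⟨hm.ne'⟩
  have key : ∑' i, ENNReal.ofReal (dens α φ i) ^ (p / 2) ≤
      ∑' k : ℕ, (ENNReal.ofReal B ^ (p / 2) * b (k / m) ^ p) := by
    refine tsum_le_of_min _ _ fun T hT => ?_
    obtain ⟨i, hi, hmin⟩ := T.exists_min_image (dens α φ) hT
    refine ⟨i, hi, ?_⟩
    set n := (T.card - 1) / m
    have hn : m * n < T.card := by
      have h1 : m * n ≤ T.card - 1 := Nat.mul_div_le _ _
      have h2 := Finset.card_pos.2 hT
      omega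
    have hbt : b n ≠ ⊤ := by
      intro h
      refine hb (ENNReal.tsum_eq_top_of_eq_top ⟨n, ?_⟩)
      rw [h, ENNReal.top_rpow_of_pos hp]
    have h1 : ∀ t : ℝ, (b n).toReal < t → dens α φ i ≤ B * t ^ 2 := by
      intro t ht
      by_contra hcon
      push Not at hcon
      have ht0 : 0 < t := ENNReal.toReal_nonneg.trans_lt ht
      have := hcount n t ht0 ((ENNReal.lt_ofReal_iff_toReal_lt hbt).2 ht) T
        fun j hj => hcon.le.trans (hmin j hj)
      omega
    have h2 : dens α φ i ≤ B * (b n).toReal ^ 2 := by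
      have hc : ContinuousWithinAt (fun t : ℝ => B * t ^ 2) (Ioi (b n).toReal) (b n).toReal := by
        fun_prop
      refine ge_of_tendsto hc ?_
      filter_upwards [self_mem_nhdsWithin] with t ht using h1 t ht
    calc ENNReal.ofReal (dens α φ i) ^ (p / 2)
        ≤ ENNReal.ofReal (B * (b n).toReal ^ 2) ^ (p / 2) := by gcongr
      _ = ENNReal.ofReal B ^ (p / 2) * b n ^ p := by
        rw [ENNReal.ofReal_mul hB.le, ENNReal.mul_rpow_of_nonneg _ _ hq.le,
          ENNReal.ofReal_pow ENNReal.toReal_nonneg, ENNReal.ofReal_toReal hbt,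
          ← ENNReal.rpow_natCast_mul]
        congr 2
        push_cast
        ring
  have hfin : ∑' i, ENNReal.ofReal (dens α φ i ^ (p / 2)) ≠ ⊤ := by
    simp_rw [← ENNReal.ofReal_rpow_of_nonneg (hd0 _) hq.le]
    refine ne_top_of_le_ne_top ?_ key
    rw [ENNReal.tsum_mul_left, tsum_div (fun n => b n ^ p)]
    refine ENNReal.mul_ne_top (ENNReal.rpow_ne_top_of_nonneg hq.le ENNReal.ofReal_ne_top)
      (ENNReal.mul_ne_top (ENNReal.natCast_ne_top m) hb)
  have := ENNReal.summable_toReal hfin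
  refine this.congr fun i => ?_
  rw [ENNReal.toReal_ofReal (Real.rpow_nonneg (hd0 i) _)]

/-! ### A frame adapted to a finite rank operator -/

/-- A finite-dimensional space `G` mapped to a Hilbert space by `L` carries a frame adapted to an
operator `R` of rank at most `n`: at most `n` vectors `e`, together with vectors `k` in the kernel
of `R`. The bound on functionals is Cauchy–Schwarz in an orthonormal basis of `L(G)` obtained by
joining one of `L(ker R)` and one of its orthogonal complement. -/
lemma split_frame {G E W : Type} [AddCommGroup G] [Module ℂ G] [FiniteDimensional ℂ G]
    [NormedAddCommGroup E] [InnerProductSpace ℂ E] [AddCommGroup W] [Module ℂ W]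
    (L : G →ₗ[ℂ] E) (R : G →ₗ[ℂ] W) {n : ℕ}
    (hn : Module.finrank ℂ (LinearMap.range R) ≤ n) :
    ∃ (a b : ℕ) (e : Fin a → G) (k : Fin b → G), a ≤ n ∧ b ≤ Module.finrank ℂ G ∧
      (∀ j, R (k j) = 0) ∧ (∀ j, ‖L (e j)‖ = 1) ∧ (∀ j, ‖L (k j)‖ = 1) ∧
      ∀ ev : G →ₗ[ℂ] ℂ, (∀ f, L f = 0 → ev f = 0) → ∀ f,
        ‖ev f‖ ^ 2 ≤ ‖L f‖ ^ 2 * (∑ j, ‖ev (e j)‖ ^ 2 + ∑ j, ‖ev (k j)‖ ^ 2) := by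
  set K : Submodule ℂ E := (LinearMap.ker R).map L with hK
  set Q : Submodule ℂ E := Kᗮ ⊓ LinearMap.range L with hQ
  have hKE : K ≤ LinearMap.range L := by
    rw [hK, LinearMap.range_eq_map]
    exact Submodule.map_mono le_top
  have : FiniteDimensional ℂ Q := Submodule.finiteDimensional_of_le inf_le_right
  have hdim := Submodule.finrank_add_inf_finrank_orthogonal hKE
  obtain ⟨C, hC⟩ := Submodule.exists_isCompl (LinearMap.ker R)
  have hCn : Module.finrank ℂ C ≤ n := by
    refine le_trans ?_ hn
    refine LinearMap.finrank_le_finrank_of_injective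
      (f := (R.rangeRestrict).domRestrict C) ?_
    rw [injective_iff_map_eq_zero]
    intro x hx
    have hx' : R x.1 = 0 := congrArg Subtype.val hx
    have := hC.disjoint.le_bot (x := x.1) ⟨hx', x.2⟩
    exact Subtype.ext this
  have hQn : Module.finrank ℂ Q ≤ n := by
    have h1 : LinearMap.range L ≤ K ⊔ C.map L := by
      rw [hK, ← Submodule.map_sup, hC.sup_eq_top, LinearMap.range_eq_map]
    have h2 := Submodule.finrank_mono h1
    have h3 := Submodule.finrank_add_le_finrank_add_finrank K (C.map L)
    have h4 := Submodule.finrank_map_le L C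
    rw [← hQ] at hdim
    omega
  have hKn : Module.finrank ℂ K ≤ Module.finrank ℂ G :=
    (Submodule.finrank_map_le L _).trans (Submodule.finrank_le _)
  let bQ := stdOrthonormalBasis ℂ Q
  let bK := stdOrthonormalBasis ℂ K
  choose e he using fun j => (bQ j).2.2
  choose k hk using fun j => (bK j).2
  refine ⟨_, _, e, k, hQn, hKn, fun j => (hk j).1, fun j => ?_, fun j => ?_, ?_⟩
  · rw [he]; exact bQ.orthonormal.1 j
  · rw [(hk j).2]; exact bK.orthonormal.1 j
  intro ev hev f
  set x : E := L f with hx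
  set y : K := K.orthogonalProjectionOnto x with hy
  have hyQ : x - y ∈ Q := by
    refine ⟨K.sub_starProjection_mem_orthogonal x, ?_⟩
    exact Submodule.sub_mem _ ⟨f, rfl⟩ (hKE y.2)
  set w : Q := ⟨x - y, hyQ⟩ with hw
  have hsum : ‖x‖ ^ 2 = ‖w‖ ^ 2 + ‖y‖ ^ 2 := by
    have h1 : inner ℂ ((w : E)) (y : E) = 0 := by
      exact (Submodule.mem_orthogonal' K _).1 hyQ.1 _ y.2
    have := norm_add_sq_eq_norm_sq_add_norm_sq_of_inner_eq_zero (w : E) (y : E) h1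
    have h2 : (w : E) + y = x := by simp [hw]
    rw [h2] at this
    simp only [← sq] at this
    exact this
  set c : _ → ℂ := fun j => inner ℂ (bQ j) w
  set d : _ → ℂ := fun j => inner ℂ (bK j) y
  have hrep : L f = L (∑ j, c j • e j + ∑ j, d j • k j) := by
    have h1 : ((∑ j, c j • bQ j : Q) : E) = w := by rw [bQ.sum_repr']
    have h2 : ((∑ j, d j • bK j : K) : E) = y := by rw [bK.sum_repr']
    simp only [map_add, map_sum, map_smul, he]
    simp only [Submodule.coe_sum, Submodule.coe_smul] at h1 h2
    rw [h1]
    simp only [fun j => (hk j).2]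
    rw [h2]
    simp [hw]
    rfl
  have hevf : ev f = ∑ j, c j * ev (e j) + ∑ j, d j * ev (k j) := by
    have h1 := hev (f - (∑ j, c j • e j + ∑ j, d j • k j)) (by rw [map_sub, hrep, sub_self])
    rw [map_sub, sub_eq_zero] at h1
    rw [h1]
    simp
  have hc : ∑ j, ‖c j‖ ^ 2 = ‖w‖ ^ 2 := bQ.sum_sq_norm_inner_right w
  have hd : ∑ j, ‖d j‖ ^ 2 = ‖y‖ ^ 2 := bK.sum_sq_norm_inner_right y
  rw [hsum, ← hc, ← hd, hevf]
  have key := Finset.sum_mul_sq_le_sq_mul_sq Finset.univ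
    (Sum.elim (fun j => ‖c j‖) fun j => ‖d j‖)
    (Sum.elim (fun j => ‖ev (e j)‖) fun j => ‖ev (k j)‖)
  simp only [Fintype.sum_sum_type, Sum.elim_inl, Sum.elim_inr] at key
  refine le_trans ?_ key
  gcongr
  refine (norm_add_le _ _).trans (add_le_add ?_ ?_) <;>
  · refine (norm_sum_le _ _).trans (le_of_eq ?_)
    simp only [norm_mul]

/-- The frame of `split_frame` for the span of a finite family `F i`, `i ∈ S`. -/
lemma split_frame_span {V E W ι : Type} [AddCommGroup V] [Module ℂ V]
    [NormedAddCommGroup E] [InnerProductSpace ℂ E] [AddCommGroup W] [Module ℂ W]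
    (L : V →ₗ[ℂ] E) (R : V →ₗ[ℂ] W) {n : ℕ}
    (hR : Module.rank ℂ (LinearMap.range R) < ((n + 1 : ℕ) : Cardinal))
    (F : ι → V) (S : Finset ι) :
    ∃ (a b : ℕ) (e : Fin a → V) (k : Fin b → V), a ≤ n ∧ b ≤ S.card ∧
      (∀ j, R (k j) = 0) ∧ (∀ j, ‖L (e j)‖ = 1) ∧ (∀ j, ‖L (k j)‖ = 1) ∧
      ∀ ev : V →ₗ[ℂ] ℂ, (∀ f, L f = 0 → ev f = 0) → ∀ i ∈ S,
        ‖ev (F i)‖ ^ 2 ≤ ‖L (F i)‖ ^ 2 * (∑ j, ‖ev (e j)‖ ^ 2 + ∑ j, ‖ev (k j)‖ ^ 2) := by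
  have hfd : FiniteDimensional ℂ (Submodule.span ℂ (F '' (S : Set ι))) :=
    FiniteDimensional.span_of_finite ℂ (S.finite_toSet.image F)
  have hGcard : Module.finrank ℂ (Submodule.span ℂ (F '' (S : Set ι))) ≤ S.card := by
    classical
    have := finrank_span_finset_le_card (R := ℂ) (S.image F)
    rw [Finset.coe_image] at this
    exact this.trans Finset.card_image_le
  have hFG : ∀ i ∈ S, F i ∈ Submodule.span ℂ (F '' (S : Set ι)) := fun i hi =>
    Submodule.subset_span ⟨i, hi, rfl⟩
  generalize Submodule.span ℂ (F '' (S : Set ι)) = G at hfd hGcard hFG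
  have hRn : Module.finrank ℂ (LinearMap.range (R ∘ₗ G.subtype)) ≤ n := by
    have h1 : Module.rank ℂ (LinearMap.range (R ∘ₗ G.subtype)) < ((n + 1 : ℕ) : Cardinal) :=
      (LinearMap.rank_comp_le_left _ R).trans_lt hR
    rw [← Module.finrank_eq_rank, Nat.cast_lt] at h1
    omega
  obtain ⟨a, b, e, k, han, hbn, hk, he1, hk1, hev⟩ := split_frame (L ∘ₗ G.subtype) _ hRn
  exact ⟨a, b, fun j => (e j).1, fun j => (k j).1, han, hbn.trans hGcard, hk, he1, hk1,
    fun ev h i hi => hev (ev ∘ₗ G.subtype) (fun f hf => h _ hf) ⟨F i, hFG i hi⟩⟩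

/-! ### The lower estimate on `𝒟_{α,*}` -/

/-- The weighted sum `∑_{i ∈ S} (T / d_i) ∫_{φ⁻¹(cell i)} |f'(φ)|² |φ'|² dν_σ`, where `d_i` is the
normalized mass of the cell; the factor `T / d_i` equalizes the cells. -/
def wsum (σ : ℝ) (φ : ℂ → ℂ) (S : Finset WI) (T : ℝ) (f : ℂ → ℂ) : ℝ≥0∞ :=
  ∑ i ∈ S, ENNReal.ofReal (T / dens σ φ i) *
    ∫⁻ z in pre φ i, ‖deriv f (φ z)‖ₑ ^ 2 * ‖deriv φ z‖ₑ ^ 2 ∂(nuM σ)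

lemma dens_cancel {σ : ℝ} {φ : ℂ → ℂ} {i : WI} (hm : mass σ φ i ≠ ⊤) (hd : 0 < dens σ φ i)
    {A T : ℝ} (hA : 0 ≤ A) (hT : 0 ≤ T) :
    ENNReal.ofReal (T / dens σ φ i) * (ENNReal.ofReal (A * hh i ^ (-(2 + σ))) * mass σ φ i) =
      ENNReal.ofReal (A * T) := by
  have hhi := hh_pos i
  rw [← ENNReal.ofReal_toReal hm, ← ENNReal.ofReal_mul (by positivity), ← ENNReal.ofReal_mul (by positivity)]
  congr 1
  calc _ = A * T * (((mass σ φ i).toReal * hh i ^ (-(2 + σ))) / dens σ φ i) := by ring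
    _ = _ := by rw [← dens, div_self hd.ne', mul_one]

/-- The subharmonicity bound for `wsum`: after equalization only the bounded overlap of the cells
matters. -/
lemma wsum_le_local {σ : ℝ} (hσ : -1 < σ) {φ : ℂ → ℂ} (hφ : IsSchur φ)
    (hm : ∀ i, mass σ φ i ≠ ⊤) {S : Finset WI} (hS : ∀ i ∈ S, 0 < dens σ φ i) {T : ℝ} (hT : 0 ≤ T)
    (f : VS σ) : wsum σ φ S T f.1 ≤ ENNReal.ofReal (3675 * ptC σ * T) * ‖Lam σ f‖ₑ ^ 2 := by
  have hpt := ptC_pos hσ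
  have hfin : ∫⁻ z, ‖deriv f.1 z‖ₑ ^ 2 ∂(nuM σ) ≠ ⊤ := (memLp_deriv_iff.1 f.2.2.2).ne
  have hcell : ∀ i ∈ S, ENNReal.ofReal (T / dens σ φ i) *
      ∫⁻ z in pre φ i, ‖deriv f.1 (φ z)‖ₑ ^ 2 * ‖deriv φ z‖ₑ ^ 2 ∂(nuM σ) ≤
      ENNReal.ofReal (ptC σ * T) *
        ∫⁻ z in ball (cen i) (hh i / 4), ‖deriv f.1 z‖ₑ ^ 2 ∂(nuM σ) := by
    intro i hi
    have hhi := hh_pos i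
    have hfi : ∫⁻ z in ball (cen i) (hh i / 4), ‖deriv f.1 z‖ₑ ^ 2 ∂(nuM σ) ≠ ⊤ :=
      ne_top_of_le_ne_top hfin (setLIntegral_le_lintegral _ _)
    set I := ∫⁻ z in ball (cen i) (hh i / 4), ‖deriv f.1 z‖ₑ ^ 2 ∂(nuM σ)
    have h1 : ∫⁻ z in pre φ i, ‖deriv f.1 (φ z)‖ₑ ^ 2 * ‖deriv φ z‖ₑ ^ 2 ∂(nuM σ) ≤
        ENNReal.ofReal (ptC σ * hh i ^ (-(2 + σ))) * I * mass σ φ i := by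
      rw [mass, ← lintegral_const_mul' _ _ (ENNReal.mul_ne_top ENNReal.ofReal_ne_top hfi)]
      refine setLIntegral_mono' (measurableSet_pre hφ i) fun z hz => ?_
      gcongr
      refine norm_sq_le_sphere hσ hhi (cen_lo i) (cen_hi i) (deriv_diffOn f.2.1) ?_
      exact (cell_dist hz.2).trans (by linarith)
    refine (mul_le_mul_right h1 _).trans (le_of_eq ?_)
    rw [← dens_cancel (hm i) (hS i hi) hpt.le hT]
    ring
  calc wsum σ φ S T f.1 ≤ ∑ i ∈ S, ENNReal.ofReal (ptC σ * T) *
        ∫⁻ z in ball (cen i) (hh i / 4), ‖deriv f.1 z‖ₑ ^ 2 ∂(nuM σ) := Finset.sum_le_sum hcell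
    _ ≤ ENNReal.ofReal (ptC σ * T) * (3675 * ∫⁻ z, ‖deriv f.1 z‖ₑ ^ 2 ∂(nuM σ)) := by
        rw [← Finset.mul_sum]
        gcongr
        exact (ENNReal.sum_le_tsum S).trans (overlap _ ((measurable_deriv f.1).enorm.pow_const 2))
    _ = _ := by
        rw [← enorm_Lam_sq, ← mul_assoc]
        congr 1
        rw [mul_comm, show (3675 : ℝ≥0∞) = ENNReal.ofReal 3675 by simp,
          ← ENNReal.ofReal_mul (by norm_num)]
        congr 1
        ring

/-- When all the weights are at most one, `wsum` is dominated by the norm of `f ∘ φ`. -/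
lemma wsum_le_comp {σ : ℝ} (hσ : -1 < σ) {φ : ℂ → ℂ} (hφ : IsSchur φ) (h0 : φ 0 = 0)
    {S : Finset WI} {T : ℝ} (hT : 0 ≤ T) (hS : ∀ i ∈ S, T ≤ dens σ φ i)
    (f : VS σ) : wsum σ φ S T f.1 ≤ eDNormSqW σ (compOp φ f.1) := by
  rw [eDNormSqW_comp hσ hφ h0 f.2.1 f.2.2.1, lintegral_pre hφ σ]
  refine le_trans (Finset.sum_le_sum fun i hi => ?_) (ENNReal.sum_le_tsum S)
  refine mul_le_of_le_one_left' ?_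
  rw [ENNReal.ofReal_le_one]
  exact div_le_one_of_le₀ (hS i hi) (hT.trans (hS i hi))

/-- Test functions adapted to the cells. -/
lemma exists_test {σ : ℝ} (hσ : -1 < σ) (i : WI) : ∃ f : VS σ,
    ‖Lam σ f‖ₑ ^ 2 ≤ nuM σ univ ∧ ∀ w ∈ uD, idx w = i.1 →
      (1 / 18 : ℝ) ^ (2 + σ) * hh i ^ (-(2 + σ)) ≤ ‖deriv f.1 w‖ ^ 2 := by
  have ha := mem_uD.1 (cen_mem i)
  obtain ⟨f, hf, hf0, hd⟩ := exists_primitive (differentiableOn_gk (σ := σ) ha)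
  have e : ∫⁻ z, ‖deriv f z‖ₑ ^ 2 ∂(nuM σ) ≤ nuM σ univ := by
    refine le_trans (le_of_eq (lintegral_congr_ae ?_)) (lintegral_gk hσ ha)
    filter_upwards [ae_nuM_mem σ] with z hz
    rw [hd z hz]
  refine ⟨⟨f, hf, hf0, memLp_deriv (e.trans_lt (lt_top_iff_ne_top.2 (nuM_univ hσ)))⟩, ?_, ?_⟩
  · rw [enorm_Lam_sq]
    exact e
  · intro w hw hi
    rw [hd w hw]
    exact gk_lower hσ (hh_pos i) (cen_lo i) (cen_hi i) (mem_uD.1 hw) (cell_dist hi)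

/-- Evaluation of the derivative at a point of the disk. -/
def evD (σ : ℝ) (w : ℂ) (hw : w ∈ uD) : VS σ →ₗ[ℂ] ℂ where
  toFun f := deriv f.1 w
  map_add' f g := deriv_add_uD f.2.1 g.2.1 hw
  map_smul' c f := deriv_smul_uD f.2.1 c hw

lemma evD_eq_zero {σ : ℝ} (hσ : -1 < σ) {w : ℂ} (hw : w ∈ uD) {f : VS σ} (hf : Lam σ f = 0) :
    evD σ w hw f = 0 := by
  obtain ⟨C, r, -, hr, h⟩ := loc_bound hσ hw
  have := h f w (by simpa using hr.le)
  rw [hf, norm_zero, mul_zero] at this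
  exact norm_le_zero_iff.1 this

/-- If `C_φ` is within `t` of an operator of rank at most `n`, then at most a constant multiple of
`n` cells have normalized mass at least a constant multiple of `t²`. -/
lemma count_cells {σ : ℝ} (hσ : -1 < σ) {φ : ℂ → ℂ} (hφ : IsSchur φ) (h0 : φ 0 = 0)
    (hm : ∀ i, mass σ φ i ≠ ⊤) {n : ℕ} {t T c M : ℝ} (ht : 0 < t) (hT0 : 0 < T)
    (hc : c = (1 / 18 : ℝ) ^ (2 + σ)) (hM : nuM σ univ ≤ ENNReal.ofReal M) (hM0 : 0 < M)
    (R : (ℂ → ℂ) →ₗ[ℂ] (ℂ → ℂ)) (hR : Module.rank ℂ (LinearMap.range R) < ((n + 1 : ℕ) : Cardinal))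
    (happ : ∀ f, MemDWStar σ f →
      eDNormSqW σ (fun z => compOp φ f z - R f z) ≤ ENNReal.ofReal (t ^ 2) * eDNormSqW σ f)
    (S : Finset WI) (hS : ∀ i ∈ S, T ≤ dens σ φ i) :
    c * T * S.card ≤ M * (n * (3675 * ptC σ * T) + S.card * t ^ 2) := by
  have hpt := ptC_pos hσ
  have hc0 : 0 < c := by rw [hc]; positivity
  choose F hF1 hF2 using exists_test hσ
  have hsf : ∃ (a b : ℕ) (e : Fin a → VS σ) (k : Fin b → VS σ), a ≤ n ∧ b ≤ S.card ∧
      (∀ j, R (k j).1 = 0) ∧ (∀ j, ‖Lam σ (e j)‖ = 1) ∧ (∀ j, ‖Lam σ (k j)‖ = 1) ∧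
      ∀ ev : VS σ →ₗ[ℂ] ℂ, (∀ f, Lam σ f = 0 → ev f = 0) → ∀ i ∈ S,
        ‖ev (F i)‖ ^ 2 ≤ ‖Lam σ (F i)‖ ^ 2 * (∑ j, ‖ev (e j)‖ ^ 2 + ∑ j, ‖ev (k j)‖ ^ 2) :=
    split_frame_span (Lam σ) (R ∘ₗ (VS σ).subtype)
      (lt_of_le_of_lt (LinearMap.rank_comp_le_left _ R) hR) F S
  obtain ⟨a, b, e, k, han, hbn, hk, he1, hk1, hev⟩ := hsf
  -- pointwise domination of the test functions by the frame
  have hpt' : ∀ i ∈ S, ∀ w ∈ uD, ‖deriv (F i).1 w‖ₑ ^ 2 ≤ ENNReal.ofReal M *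
      (∑ j, ‖deriv (e j).1 w‖ₑ ^ 2 + ∑ j, ‖deriv (k j).1 w‖ₑ ^ 2) := by
    intro i hi w hw
    have h1 : ‖deriv (F i).1 w‖ ^ 2 ≤ ‖Lam σ (F i)‖ ^ 2 *
        (∑ j, ‖deriv (e j).1 w‖ ^ 2 + ∑ j, ‖deriv (k j).1 w‖ ^ 2) :=
      hev (evD σ w hw) (fun f hf => evD_eq_zero hσ hw hf) i hi
    have h2 := ENNReal.ofReal_le_ofReal h1
    rw [ENNReal.ofReal_mul (by positivity), ENNReal.ofReal_add (by positivity) (by positivity),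
      ENNReal.ofReal_sum_of_nonneg (fun _ _ => by positivity),
      ENNReal.ofReal_sum_of_nonneg (fun _ _ => by positivity)] at h2
    simp only [ENNReal.ofReal_pow (norm_nonneg _), ofReal_norm] at h2
    refine h2.trans ?_
    gcongr
    exact (hF1 i).trans hM
  have hpos : ∀ i ∈ S, 0 < dens σ φ i := fun i hi => hT0.trans_le (hS i hi)
  -- the lower bound, cell by cell
  have hlow : ∀ i ∈ S, ENNReal.ofReal (c * T) ≤ ENNReal.ofReal (T / dens σ φ i) *
      ∫⁻ z in pre φ i, ‖deriv (F i).1 (φ z)‖ₑ ^ 2 * ‖deriv φ z‖ₑ ^ 2 ∂(nuM σ) := by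
    intro i hi
    rw [← dens_cancel (hm i) (hpos i hi) hc0.le hT0.le, mass,
      ← lintegral_const_mul' _ _ ENNReal.ofReal_ne_top]
    gcongr ENNReal.ofReal (T / dens σ φ i) * ?_
    refine setLIntegral_mono' (measurableSet_pre hφ i) fun z hz => ?_
    gcongr
    rw [← ofReal_norm, ← ENNReal.ofReal_pow (norm_nonneg _), hc]
    exact ENNReal.ofReal_le_ofReal (hF2 i _ (hφ.2 hz.1) hz.2)
  have hmeas : ∀ f : ℂ → ℂ, ∀ i, AEMeasurable
      (fun z => ‖deriv f (φ z)‖ₑ ^ 2 * ‖deriv φ z‖ₑ ^ 2) ((nuM σ).restrict (pre φ i)) := by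
    intro f i
    have h1 : AEMeasurable φ ((nuM σ).restrict (pre φ i)) :=
      (hφ.1.continuousOn.mono fun z hz => hz.1).aemeasurable (measurableSet_pre hφ i)
    exact (((measurable_deriv f).comp_aemeasurable h1).enorm.pow_const 2).mul
      ((measurable_deriv φ).enorm.pow_const 2).aemeasurable
  have hup : ∀ i ∈ S, ENNReal.ofReal (T / dens σ φ i) *
      ∫⁻ z in pre φ i, ‖deriv (F i).1 (φ z)‖ₑ ^ 2 * ‖deriv φ z‖ₑ ^ 2 ∂(nuM σ) ≤
      ENNReal.ofReal M * (∑ j, ENNReal.ofReal (T / dens σ φ i) *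
          ∫⁻ z in pre φ i, ‖deriv (e j).1 (φ z)‖ₑ ^ 2 * ‖deriv φ z‖ₑ ^ 2 ∂(nuM σ) +
        ∑ j, ENNReal.ofReal (T / dens σ φ i) *
          ∫⁻ z in pre φ i, ‖deriv (k j).1 (φ z)‖ₑ ^ 2 * ‖deriv φ z‖ₑ ^ 2 ∂(nuM σ)) := by
    intro i hi
    rw [← Finset.mul_sum, ← Finset.mul_sum, ← mul_add, mul_left_comm,
      ← lintegral_finsetSum' _ (fun j _ => hmeas _ i), ← lintegral_finsetSum' _ (fun j _ => hmeas _ i),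
      ← lintegral_add_left' (Finset.aemeasurable_fun_sum _ fun j _ => hmeas _ i),
      ← lintegral_const_mul' (ENNReal.ofReal M) _ ENNReal.ofReal_ne_top]
    gcongr ENNReal.ofReal (T / dens σ φ i) * ?_
    refine setLIntegral_mono' (measurableSet_pre hφ i) fun z hz => ?_
    rw [← Finset.sum_mul, ← Finset.sum_mul, ← add_mul, ← mul_assoc]
    gcongr
    exact hpt' i hi _ (hφ.2 hz.1)
  have hL : ∀ j, wsum σ φ S T (e j).1 ≤ ENNReal.ofReal (3675 * ptC σ * T) := by
    intro j
    have h1 := wsum_le_local hσ hφ hm hpos hT0.le (e j)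
    have h2 : ‖Lam σ (e j)‖ₑ = 1 := by
      rw [← ofReal_norm]
      exact (congrArg ENNReal.ofReal (he1 j)).trans ENNReal.ofReal_one
    rwa [h2, one_pow, mul_one] at h1
  have hK : ∀ j, wsum σ φ S T (k j).1 ≤ ENNReal.ofReal (t ^ 2) := by
    intro j
    have h1 := wsum_le_comp hσ hφ h0 hT0.le hS (k j)
    have h2 : ‖Lam σ (k j)‖ₑ = 1 := by
      rw [← ofReal_norm]
      exact (congrArg ENNReal.ofReal (hk1 j)).trans ENNReal.ofReal_one
    have h3 := happ _ ((mem_VS hσ).1 (k j).2)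
    have h4 : R (k j).1 = 0 := hk j
    rw [NSq_eq_Lam hσ, h2, one_pow, mul_one, h4] at h3
    simp only [Pi.zero_apply, sub_zero] at h3
    exact h1.trans h3
  have key : ENNReal.ofReal (c * T * S.card) ≤
      ENNReal.ofReal (M * (n * (3675 * ptC σ * T) + S.card * t ^ 2)) := by
    calc ENNReal.ofReal (c * T * S.card) = ∑ i ∈ S, ENNReal.ofReal (c * T) := by
          rw [Finset.sum_const, nsmul_eq_mul, mul_comm, ENNReal.ofReal_mul (by positivity),
            ENNReal.ofReal_natCast]
      _ ≤ _ := Finset.sum_le_sum fun i hi => (hlow i hi).trans (hup i hi)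
      _ = ENNReal.ofReal M * (∑ j, wsum σ φ S T (e j).1 + ∑ j, wsum σ φ S T (k j).1) := by
          rw [← Finset.mul_sum, Finset.sum_add_distrib, Finset.sum_comm]
          congr 2
          rw [Finset.sum_comm]
          rfl
      _ ≤ ENNReal.ofReal M * (∑ j : Fin a, ENNReal.ofReal (3675 * ptC σ * T) +
            ∑ j : Fin b, ENNReal.ofReal (t ^ 2)) := by
          gcongr with j _ j _
          · exact hL j
          · exact hK j
      _ = ENNReal.ofReal (M * (a * (3675 * ptC σ * T) + b * t ^ 2)) := by
          simp only [Finset.sum_const, nsmul_eq_mul, Finset.card_univ, Fintype.card_fin]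
          rw [ENNReal.ofReal_mul hM0.le, ENNReal.ofReal_add (by positivity) (by positivity),
            ENNReal.ofReal_mul (p := (a : ℝ)) (by positivity), ENNReal.ofReal_natCast,
            ENNReal.ofReal_mul (p := (b : ℝ)) (by positivity), ENNReal.ofReal_natCast]
      _ ≤ _ := by
          have : b ≤ S.card := hbn
          gcongr
  exact (ENNReal.ofReal_le_ofReal_iff (by positivity)).1 key

/-- The masses are finite because the identity function belongs to `𝒟_{σ,*}`. -/
lemma mass_ne_top {σ : ℝ} (hσ : -1 < σ) {φ : ℂ → ℂ} (hφ : IsSchur φ) (h0 : φ 0 = 0)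
    (hb : IsBoundedOpOn (MemDWStar σ) (eDNormSqW σ) (compOp φ)) (i : WI) : mass σ φ i ≠ ⊤ := by
  have hid : (fun z : ℂ => z) ∈ VS σ := by
    refine ⟨differentiableOn_id, rfl, memLp_deriv ?_⟩
    simp [lt_top_iff_ne_top, nuM_univ hσ]
  have h1 := (hb.1 _ ((mem_VS hσ).1 hid)).1.2
  rw [eDNormSqW_comp hσ hφ h0 hid.1 rfl] at h1
  simp only [deriv_id'', enorm_one, one_pow, one_mul] at h1
  exact ne_top_of_le_ne_top h1.ne (setLIntegral_le_lintegral _ _)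

/- STATEMENT 13 -/
theorem stmt13 (α β p : ℝ) (hα : -1 < α) (hαβ : α ≤ β) (hp : 0 < p)
    (φ : ℂ → ℂ) (hφ : IsSchur φ) (h0 : φ 0 = 0)
    (hS : MemSchattenOn (MemDWStar α) (eDNormSqW α) (compOp φ) p) :
    MemSchattenOn (MemDWStar β) (eDNormSqW β) (compOp φ) p := by
  have hm := mass_ne_top hα hφ h0 hS.1
  have hpt := ptC_pos hα
  refine schatten_of_sum hα hαβ hp hφ h0 hm ?_
  set c : ℝ := (1 / 18 : ℝ) ^ (2 + α) with hc
  have hc0 : 0 < c := by positivity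
  set M : ℝ := (nuM α univ).toReal + 1
  have hM0 : 0 < M := by positivity
  have hM : nuM α univ ≤ ENNReal.ofReal M := by
    rw [← ENNReal.ofReal_toReal (nuM_univ hα)]
    exact ENNReal.ofReal_le_ofReal (by simp only [M]; linarith)
  -- With this `B` the kernel part of `count_cells` is absorbed by half of the left-hand side.
  set B : ℝ := 2 * M / c with hB
  have hB0 : 0 < B := by positivity
  have hcB : c * B = 2 * M := by rw [hB]; field_simp
  refine sum_of_count hp _ hS.2 B hB0 (⌈3675 * ptC α * B⌉₊ + 1) (Nat.succ_pos _) ?_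
  intro n t ht hb S hSd
  obtain ⟨_, ⟨R, hR, rfl⟩, hRt⟩ := sInf_lt_iff.1 hb
  obtain ⟨C, hC, hCt⟩ := sInf_lt_iff.1 hRt
  have happ : ∀ f, MemDWStar α f → eDNormSqW α (fun z => compOp φ f z - R f z) ≤
      ENNReal.ofReal (t ^ 2) * eDNormSqW α f := by
    intro f hf
    refine (hC f hf).trans ?_
    rw [ENNReal.ofReal_pow ht.le]
    gcongr
  have key := count_cells hα hφ h0 hm (T := B * t ^ 2) ht (by positivity) hc hM hM0 R hR happ S hSd
  have h1 : M * t ^ 2 * (S.card : ℝ) ≤ M * t ^ 2 * (n * (3675 * ptC α * B)) := by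
    have e : c * (B * t ^ 2) * S.card = 2 * M * t ^ 2 * S.card := by rw [← hcB]; ring
    rw [e] at key
    linarith
  have h2 : (S.card : ℝ) ≤ n * (3675 * ptC α * B) := le_of_mul_le_mul_left h1 (by positivity)
  have h3 : (S.card : ℝ) ≤ ((⌈3675 * ptC α * B⌉₊ + 1) * n : ℕ) := by
    refine h2.trans ?_
    push_cast
    have := Nat.le_ceil (3675 * ptC α * B)
    have hn : (0 : ℝ) ≤ n := n.cast_nonneg
    nlinarith
  exact_mod_cast h3

end
end
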